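/- arXiv:2605.09209 — 8 statements merged into one kernel-verified Lean document; each statement's English description precedes it below -/
import Mathlib

section
/- C¹ envelope theorem under uniqueness of minimizers (coordinate form of the theorem that unique optimistic selection implies continuous differentiability of the hyper-objective): Let V ⊆ ℝ^m be open, let U ⊆ ℝ^ℓ be a nonempty compact set, and let φ : ℝ^m × ℝ^ℓ → ℝ be continuous on V × U. Assume that for every u ∈ U the map θ ↦ φ(θ,u) is differentiable on V, and that the partial gradient (θ,u) ↦ ∇_θ φ(θ,u) is continuous on V × U. Define the value function F(θ) := min_{u∈U} φ(θ,u) for θ ∈ V. If for every θ ∈ V the set {u ∈ U : φ(θ,u) = F(θ)} is a singleton {u*(θ)}, then: (i) the map u* : V → U is continuous; (ii) F is differentiable at every θ ∈ V with ∇F(θ) = ∇_θ φ(θ, u*(θ)); (iii) ∇F is continuous on V, so F is continuously differentiable on V. -/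
open Set

/-!
Near `(θ₀, u₀)` the continuous partial gradient makes the expansion of `φ (·, u)` at `θ₀` hold with
an `o(θ - θ₀)` remainder that is uniform in `u`. Hence `φ` is jointly lower semicontinuous, so every
cluster point of the minimizers `u*(θ)` as `θ → θ₀` minimizes `φ (θ₀, ·)`; by compactness and
uniqueness, `u*(θ) → u*(θ₀)`. Finally `F` is squeezed to first order, since
`φ (θ, u*(θ)) - φ (θ₀, u*(θ)) ≤ F θ - F θ₀ ≤ φ (θ, u*(θ₀)) - φ (θ₀, u*(θ₀))`.
-/

open Filter Topology Asymptotics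

section UniqueMinimizer

variable {Θ X R : Type*}

/-- `u` is the unique minimizer of `f` over `U`, expressed by strict inequalities so that it makes
sense without referring to the minimum value. -/
def IsUniqueMinOn [Preorder R] (f : X → R) (U : Set X) (u : X) : Prop :=
  u ∈ U ∧ ∀ y ∈ U, y ≠ u → f u < f y

theorem IsUniqueMinOn.isMinOn [Preorder R] {f : X → R} {U : Set X} {u : X}
    (h : IsUniqueMinOn f U u) : IsMinOn f U u := by
  intro y hy
  obtain rfl | hne := eq_or_ne y u
  · exact le_rfl
  · exact (h.2 y hy hne).le

theorem isUniqueMinOn_of_setOf_eq_sInf_eq_singleton [ConditionallyCompleteLattice R] {f : X → R}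
    {U : Set X} {u : X} (hbdd : BddBelow (f '' U))
    (h : {x | x ∈ U ∧ f x = sInf (f '' U)} = {u}) : IsUniqueMinOn f U u := by
  have hmin (x : X) : x ∈ U ∧ f x = sInf (f '' U) ↔ x = u := Set.ext_iff.1 h x
  obtain ⟨huU, hu⟩ := (hmin u).2 rfl
  refine ⟨huU, fun y hyU hne => lt_of_le_of_ne ?_ fun hy => hne ?_⟩
  · exact hu.trans_le (csInf_le hbdd (mem_image_of_mem f hyU))
  · exact (hmin y).1 ⟨hyU, hy.symm.trans hu⟩

theorem continuousOn_of_isUniqueMinOn [TopologicalSpace Θ] [TopologicalSpace X] [LinearOrder R]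
    [DenselyOrdered R] {φ : Θ → X → R} {V : Set Θ} {U : Set X} {s : Θ → X} (hU : IsCompact U)
    (hlsc : LowerSemicontinuousOn (fun p : Θ × X => φ p.1 p.2) (V ×ˢ U))
    (husc : ∀ u ∈ U, UpperSemicontinuousOn (φ · u) V)
    (hs : ∀ θ ∈ V, IsUniqueMinOn (φ θ) U (s θ)) : ContinuousOn s V := by
  intro θ₀ hθ₀
  have hV : ∀ᶠ θ in 𝓝[V] θ₀, θ ∈ V := self_mem_nhdsWithin
  refine hU.tendsto_nhds_of_unique_mapClusterPt (hV.mono fun θ hθ => (hs θ hθ).1) ?_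
  intro y hyU hy
  by_contra hne
  obtain ⟨c, hsc, hcy⟩ := exists_between ((hs θ₀ hθ₀).2 y hyU hne)
  have hupper : ∀ᶠ θ in 𝓝[V] θ₀, φ θ (s θ₀) < c := husc _ (hs θ₀ hθ₀).1 θ₀ hθ₀ c hsc
  have hlower : ∀ᶠ p in 𝓝[V] θ₀ ×ˢ 𝓝[U] y, c < φ p.1 p.2 := by
    rw [← nhdsWithin_prod_eq]
    exact hlsc (θ₀, y) ⟨hθ₀, hyU⟩ c hcy
  obtain ⟨P, hP, Q, hQ, hPQ⟩ := eventually_prod_iff.1 hlower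
  have hfreq : ∃ᶠ θ in 𝓝[V] θ₀, s θ ∈ U → Q (s θ) :=
    hy.frequently (eventually_nhdsWithin_iff.1 hQ)
  obtain ⟨θ, hQθ, hθV, hPθ, hθc⟩ := (hfreq.and_eventually (hV.and (hP.and hupper))).exists
  have hcs : c < φ θ (s θ) := hPQ hPθ (hQθ (hs θ hθV).1)
  exact (hcs.trans_le ((hs θ hθV).isMinOn (hs θ₀ hθ₀).1)).not_gt hθc

end UniqueMinimizer

section UniformExpansion

variable {𝕜 E G X : Type*} [NontriviallyNormedField 𝕜] [NormedAddCommGroup E] [NormedSpace 𝕜 E]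
  [NormedAddCommGroup G] [NormedSpace 𝕜 G] {φ : E → X → G} {θ₀ : E} {l : Filter X} {D : E →L[𝕜] G}

theorem isLittleO_sub_sub_of_tendsto_partial_fderiv [IsRCLikeNormedField 𝕜] [NormedSpace ℝ E]
    {φ' : E → X → E →L[𝕜] G}
    (hφ : ∀ᶠ p in 𝓝 θ₀ ×ˢ l, HasFDerivAt (φ · p.2) (φ' p.1 p.2) p.1)
    (hφ' : Tendsto (fun p : E × X => φ' p.1 p.2) (𝓝 θ₀ ×ˢ l) (𝓝 D)) :
    (fun p : E × X => φ p.1 p.2 - φ θ₀ p.2 - D (p.1 - θ₀)) =o[𝓝 θ₀ ×ˢ l] fun p => p.1 - θ₀ := by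
  refine isLittleO_iff.2 fun ε hε => ?_
  have hclose : ∀ᶠ p in 𝓝 θ₀ ×ˢ l, ‖φ' p.1 p.2 - D‖ ≤ ε := by
    filter_upwards [hφ' (Metric.ball_mem_nhds D hε)] with p hp using (mem_ball_iff_norm.1 hp).le
  obtain ⟨⟨r, S⟩, ⟨hr, hS⟩, hball⟩ :=
    (Metric.nhds_basis_ball.prod l.basis_sets).eventually_iff.1 (hφ.and hclose)
  filter_upwards [prod_mem_prod (Metric.ball_mem_nhds θ₀ hr) hS] with ⟨θ, u⟩ ⟨hθ, hu⟩
  exact (convex_ball θ₀ r).norm_image_sub_le_of_norm_hasFDerivWithin_le' (f := (φ · u))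
    (f' := (φ' · u)) (fun x hx => (hball (mk_mem_prod hx hu)).1.hasFDerivWithinAt)
    (fun x hx => (hball (mk_mem_prod hx hu)).2) (Metric.mem_ball_self hr) hθ

theorem tendsto_sub_of_isLittleO_sub_sub
    (h : (fun p : E × X => φ p.1 p.2 - φ θ₀ p.2 - D (p.1 - θ₀))
      =o[𝓝 θ₀ ×ˢ l] fun p => p.1 - θ₀) :
    Tendsto (fun p : E × X => φ p.1 p.2 - φ θ₀ p.2) (𝓝 θ₀ ×ˢ l) (𝓝 0) := by
  have hsub : Tendsto (fun p : E × X => p.1 - θ₀) (𝓝 θ₀ ×ˢ l) (𝓝 0) :=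
    tendsto_sub_nhds_zero_iff.2 tendsto_fst
  have hD : Tendsto (fun p : E × X => D (p.1 - θ₀)) (𝓝 θ₀ ×ˢ l) (𝓝 0) :=
    (map_zero D ▸ D.continuous.tendsto 0).comp hsub
  simpa only [sub_add_cancel, add_zero] using (h.trans_tendsto hsub).add hD

end UniformExpansion

theorem lowerSemicontinuousWithinAt_of_tendsto_sub {Θ X : Type*} [TopologicalSpace Θ]
    [TopologicalSpace X] {φ : Θ → X → ℝ} {V : Set Θ} {U : Set X} {θ₀ : Θ} {u₀ : X}
    (hlsc : LowerSemicontinuousWithinAt (φ θ₀) U u₀)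
    (h : Tendsto (fun p : Θ × X => φ p.1 p.2 - φ θ₀ p.2) (𝓝[V] θ₀ ×ˢ 𝓝[U] u₀) (𝓝 0)) :
    LowerSemicontinuousWithinAt (fun p : Θ × X => φ p.1 p.2) (V ×ˢ U) (θ₀, u₀) := by
  intro c hc
  rw [nhdsWithin_prod_eq]
  obtain ⟨d, hcd, hd⟩ := exists_between hc
  filter_upwards [tendsto_snd.eventually (hlsc d hd),
    h.eventually_const_lt (sub_neg.2 hcd)] with p hdp hp
  linarith

section Envelope

variable {E X : Type*} [NormedAddCommGroup E] [NormedSpace ℝ E]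

theorem hasFDerivAt_of_minimizing_selection {φ : E → X → ℝ} {s : E → X} {θ₀ : E} {D : E →L[ℝ] ℝ}
    (hfixed : HasFDerivAt (φ · (s θ₀)) D θ₀)
    (hmoving : (fun θ => φ θ (s θ) - φ θ₀ (s θ) - D (θ - θ₀)) =o[𝓝 θ₀] fun θ => θ - θ₀)
    (hle : ∀ᶠ θ in 𝓝 θ₀, φ θ (s θ) ≤ φ θ (s θ₀))
    (hle₀ : ∀ᶠ θ in 𝓝 θ₀, φ θ₀ (s θ₀) ≤ φ θ₀ (s θ)) :
    HasFDerivAt (fun θ => φ θ (s θ)) D θ₀ := by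
  rw [hasFDerivAt_iff_isLittleO, isLittleO_iff] at hfixed ⊢
  intro ε hε
  filter_upwards [hfixed hε, isLittleO_iff.1 hmoving hε, hle, hle₀] with θ hupper hlower hθ hθ₀
  rw [Real.norm_eq_abs, abs_le] at hupper hlower ⊢
  constructor <;> linarith

variable [TopologicalSpace X] {φ : E → X → ℝ} {V : Set E} {U : Set X} {s : E → X}

theorem isLittleO_sub_sub_fderiv_of_continuousOn (hV : IsOpen V)
    (hdiff : ∀ u ∈ U, DifferentiableOn ℝ (φ · u) V)
    (hgrad : ContinuousOn (fun p : E × X => fderiv ℝ (φ · p.2) p.1) (V ×ˢ U))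
    {θ₀ : E} {u₀ : X} (hθ₀ : θ₀ ∈ V) (hu₀ : u₀ ∈ U) :
    (fun p : E × X => φ p.1 p.2 - φ θ₀ p.2 - fderiv ℝ (φ · u₀) θ₀ (p.1 - θ₀))
      =o[𝓝 θ₀ ×ˢ 𝓝[U] u₀] fun p => p.1 - θ₀ := by
  refine isLittleO_sub_sub_of_tendsto_partial_fderiv
    (φ' := fun θ u => fderiv ℝ (φ · u) θ) ?_ ?_
  · filter_upwards [prod_mem_prod (hV.mem_nhds hθ₀) self_mem_nhdsWithin] with ⟨θ, u⟩ ⟨hθ, hu⟩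
    exact ((hdiff u hu).differentiableAt (hV.mem_nhds hθ)).hasFDerivAt
  · rw [← hV.nhdsWithin_eq hθ₀, ← nhdsWithin_prod_eq]
    exact hgrad (θ₀, u₀) ⟨hθ₀, hu₀⟩

theorem lowerSemicontinuousOn_prod_of_continuousOn_fderiv (hV : IsOpen V)
    (hlsc : ∀ θ ∈ V, LowerSemicontinuousOn (φ θ) U)
    (hdiff : ∀ u ∈ U, DifferentiableOn ℝ (φ · u) V)
    (hgrad : ContinuousOn (fun p : E × X => fderiv ℝ (φ · p.2) p.1) (V ×ˢ U)) :
    LowerSemicontinuousOn (fun p : E × X => φ p.1 p.2) (V ×ˢ U) := by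
  rintro ⟨θ, u⟩ ⟨hθ, hu⟩
  refine lowerSemicontinuousWithinAt_of_tendsto_sub (hlsc θ hθ u hu) ?_
  rw [hV.nhdsWithin_eq hθ]
  exact tendsto_sub_of_isLittleO_sub_sub
    (isLittleO_sub_sub_fderiv_of_continuousOn hV hdiff hgrad hθ hu)

theorem hasFDerivAt_of_isMinOn (hV : IsOpen V)
    (hdiff : ∀ u ∈ U, DifferentiableOn ℝ (φ · u) V)
    (hgrad : ContinuousOn (fun p : E × X => fderiv ℝ (φ · p.2) p.1) (V ×ˢ U))
    (hsU : MapsTo s V U) (hs : ∀ θ ∈ V, IsMinOn (φ θ) U (s θ)) (hscont : ContinuousOn s V)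
    {θ₀ : E} (hθ₀ : θ₀ ∈ V) :
    HasFDerivAt (fun θ => φ θ (s θ)) (fderiv ℝ (φ · (s θ₀)) θ₀) θ₀ := by
  have hVθ₀ : V ∈ 𝓝 θ₀ := hV.mem_nhds hθ₀
  have hsθ₀ : s θ₀ ∈ U := hsU hθ₀
  have hs_tendsto : Tendsto s (𝓝 θ₀) (𝓝[U] s θ₀) :=
    tendsto_nhdsWithin_iff.2 ⟨hscont.continuousAt hVθ₀, eventually_of_mem hVθ₀ hsU⟩
  refine hasFDerivAt_of_minimizing_selection
    ((hdiff _ hsθ₀).differentiableAt hVθ₀).hasFDerivAt ?_ ?_ ?_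
  · exact (isLittleO_sub_sub_fderiv_of_continuousOn hV hdiff hgrad hθ₀ hsθ₀).comp_tendsto
      (tendsto_id.prodMk hs_tendsto)
  · exact eventually_of_mem hVθ₀ fun θ hθ => hs θ hθ hsθ₀
  · exact eventually_of_mem hVθ₀ fun θ hθ => hs θ₀ hθ₀ (hsU hθ)

theorem c1_envelope_unique_minimizers_general (hV : IsOpen V) (hU : IsCompact U)
    (hlsc : ∀ θ ∈ V, LowerSemicontinuousOn (φ θ) U)
    (hdiff : ∀ u ∈ U, DifferentiableOn ℝ (φ · u) V)
    (hgrad : ContinuousOn (fun p : E × X => fderiv ℝ (φ · p.2) p.1) (V ×ˢ U))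
    {F : E → ℝ} (hF : ∀ θ ∈ V, F θ = sInf (φ θ '' U))
    (hs : ∀ θ ∈ V, {u | u ∈ U ∧ φ θ u = F θ} = {s θ}) :
    ContinuousOn s V ∧ (∀ θ ∈ V, HasFDerivAt F (fderiv ℝ (φ · (s θ)) θ) θ) ∧
      ContinuousOn (fderiv ℝ F) V := by
  have hmin : ∀ θ ∈ V, IsUniqueMinOn (φ θ) U (s θ) := fun θ hθ =>
    isUniqueMinOn_of_setOf_eq_sInf_eq_singleton ((hlsc θ hθ).bddBelow_of_isCompact hU)
      (hF θ hθ ▸ hs θ hθ)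
  have hsU : MapsTo s V U := fun θ hθ => (hmin θ hθ).1
  have hFs : EqOn F (fun θ => φ θ (s θ)) V := fun θ hθ =>
    ((hs θ hθ).ge (mem_singleton (s θ))).2.symm
  have hscont : ContinuousOn s V :=
    continuousOn_of_isUniqueMinOn hU
      (lowerSemicontinuousOn_prod_of_continuousOn_fderiv hV hlsc hdiff hgrad)
      (fun u hu => (hdiff u hu).continuousOn.upperSemicontinuousOn) hmin
  have hderiv : ∀ θ ∈ V, HasFDerivAt F (fderiv ℝ (φ · (s θ)) θ) θ := fun θ hθ =>
    (hasFDerivAt_of_isMinOn hV hdiff hgrad hsU (fun θ hθ => (hmin θ hθ).isMinOn) hscont hθ)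
      |>.congr_of_eventuallyEq (hFs.eventuallyEq_of_mem (hV.mem_nhds hθ))
  have hgrad_comp : ContinuousOn (fun θ => fderiv ℝ (φ · (s θ)) θ) V :=
    hgrad.comp (continuousOn_id.prodMk hscont) fun θ hθ => ⟨hθ, hsU hθ⟩
  exact ⟨hscont, hderiv, hgrad_comp.congr fun θ hθ => (hderiv θ hθ).fderiv⟩

end Envelope

/-- **C¹ envelope theorem under uniqueness of minimizers.**
If `U` is nonempty compact, `φ` is continuous on `V ×ˢ U`, `θ ↦ φ θ u` is differentiable on the
open set `V` for each `u ∈ U`, the partial derivative in `θ` is continuous on `V ×ˢ U`,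
`F θ = min_{u ∈ U} φ θ u`, and for every `θ ∈ V` the set of minimizers of `φ θ ·` over `U` is
the singleton `{ustar θ}`, then `ustar` is continuous on `V`, `F` is differentiable at every
`θ ∈ V` with derivative `∇_θ φ (θ, ustar θ)`, and the derivative of `F` is continuous on `V`. -/
theorem c1_envelope_unique_minimizers
    {m l : ℕ}
    (V : Set (EuclideanSpace ℝ (Fin m))) (U : Set (EuclideanSpace ℝ (Fin l)))
    (φ : EuclideanSpace ℝ (Fin m) → EuclideanSpace ℝ (Fin l) → ℝ)
    (hV : IsOpen V)
    (hUcpt : IsCompact U) (hUne : U.Nonempty)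
    (hφcont : ContinuousOn
      (fun p : EuclideanSpace ℝ (Fin m) × EuclideanSpace ℝ (Fin l) => φ p.1 p.2) (V ×ˢ U))
    (hφdiff : ∀ u ∈ U, DifferentiableOn ℝ (fun θ => φ θ u) V)
    (hgradcont : ContinuousOn
      (fun p : EuclideanSpace ℝ (Fin m) × EuclideanSpace ℝ (Fin l) =>
        fderiv ℝ (fun θ => φ θ p.2) p.1)
      (V ×ˢ U))
    (F : EuclideanSpace ℝ (Fin m) → ℝ)
    (hF : ∀ θ, F θ = sInf ((fun u => φ θ u) '' U))
    (ustar : EuclideanSpace ℝ (Fin m) → EuclideanSpace ℝ (Fin l))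
    (huniq : ∀ θ ∈ V, {u | u ∈ U ∧ φ θ u = F θ} = {ustar θ}) :
    ContinuousOn ustar V ∧
    (∀ θ ∈ V, HasFDerivAt F (fderiv ℝ (fun θ' => φ θ' (ustar θ)) θ) θ) ∧
    ContinuousOn (fun θ => fderiv ℝ F θ) V :=
  c1_envelope_unique_minimizers_general hV hUcpt
    (fun θ hθ => (hφcont.uncurry_left θ hθ).lowerSemicontinuousOn)
    hφdiff hgradcont (fun θ _ => hF θ) huniq
end

section
/- Convergence of inexact projected gradient descent to near-stationarity: Let Θ ⊆ ℝ^m be a nonempty compact convex set and let P : ℝ^m → ℝ^m denote the metric projection onto Θ. Let F : ℝ^m → ℝ be differentiable at every point of Θ with gradient ∇F that is L-Lipschitz on Θ for some L > 0, and set F⋆ := inf_{θ∈Θ} F(θ). Fix a stepsize α with 0 < α ≤ 1/L. Let θ₀ ∈ Θ, let (ĥ_t)_{t≥0} be an arbitrary sequence in ℝ^m, and define θ_{t+1} := P(θ_t − α ĥ_t). Set e_t := ĥ_t − ∇F(θ_t) and the gradient mapping 𝒢_t := α^{-1} (θ_t − P(θ_t − α ∇F(θ_t))). Then for every integer T ≥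 1: (1/T) ∑_{t=0}^{T−1} ‖𝒢_t‖² ≤ 8 (F(θ₀) − F⋆) / (α T) + (10/T) ∑_{t=0}^{T−1} ‖e_t‖². -/
/-!
The obtuse angle property of the projection turns the smoothness upper bound for `F` into a
sufficient decrease estimate: for a step `d` made with the inexact direction and error `e`, Young's
inequality gives `‖d‖² ≤ 4α (F θ - F θ⁺) + 4 ‖α e‖²`. As the projection is nonexpansive, the exact
gradient step has length at most `‖d‖ + ‖α e‖`, so the squared gradient mapping is bounded by the
decrease of `F` plus a multiple of `‖e‖²`, and the decrease telescopes along the iteration.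
-/

open Finset

open scoped NNReal RealInnerProductSpace

section NearestPoint

variable {E : Type*} [NormedAddCommGroup E] {s : Set E} {x p y q z : E}

/-- `p` is a point of `s` nearest to `x`; a metric projection onto `s` is a map `P` such that
`IsNearestPoint s x (P x)` for every `x`. For convex `s` in an inner product space there is at most
one such point. -/
def IsNearestPoint (s : Set E) (x p : E) : Prop :=
  p ∈ s ∧ ∀ y ∈ s, ‖x - p‖ ≤ ‖x - y‖

variable [InnerProductSpace ℝ E]

theorem IsNearestPoint.inner_sub_sub_nonpos (hp : IsNearestPoint s x p) (hs : Convex ℝ s)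
    (hz : z ∈ s) : ⟪x - p, z - p⟫ ≤ 0 := by
  have : Nonempty s := ⟨⟨p, hp.1⟩⟩
  have hinf : ‖x - p‖ = ⨅ w : s, ‖x - w‖ :=
    le_antisymm (le_ciInf fun w ↦ hp.2 w w.2)
      (ciInf_le (f := fun w : s ↦ ‖x - w‖) ⟨0, by rintro _ ⟨w, rfl⟩; positivity⟩ ⟨p, hp.1⟩)
  exact (norm_eq_iInf_iff_real_inner_le_zero hs hp.1).1 hinf z hz

theorem IsNearestPoint.norm_sub_le_norm_sub (hp : IsNearestPoint s x p)
    (hq : IsNearestPoint s y q) (hs : Convex ℝ s) : ‖p - q‖ ≤ ‖x - y‖ := by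
  have hpq := hp.inner_sub_sub_nonpos hs hq.1
  have hqp := hq.inner_sub_sub_nonpos hs hp.1
  have hsplit : ⟪x - y, p - q⟫ = ‖p - q‖ ^ 2 - ⟪x - p, q - p⟫ - ⟪y - q, p - q⟫ := by
    rw [← real_inner_self_eq_norm_sq]
    simp only [inner_sub_left, inner_sub_right]
    ring
  have hsq : ‖p - q‖ * ‖p - q‖ ≤ ‖x - y‖ * ‖p - q‖ := by
    linarith [real_inner_le_norm (x - y) (p - q)]
  rcases (norm_nonneg (p - q)).eq_or_lt with h0 | hpos
  · exact h0 ▸ norm_nonneg (x - y)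
  · exact le_of_mul_le_mul_right hsq hpos

theorem IsNearestPoint.sq_norm_sub_add_inner_nonpos {α : ℝ} {h : E}
    (hp : IsNearestPoint s (x - α • h) p) (hs : Convex ℝ s) (hx : x ∈ s) :
    ‖p - x‖ ^ 2 + α * ⟪h, p - x⟫ ≤ 0 := by
  have hrw : ⟪x - α • h - p, x - p⟫ = ‖p - x‖ ^ 2 + α * ⟪h, p - x⟫ := by
    rw [← neg_sub p x, inner_neg_right, sub_right_comm, ← neg_sub p x, inner_sub_left,
      inner_neg_left, real_inner_self_eq_norm_sq, real_inner_smul_left]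
    ring
  exact hrw ▸ hp.inner_sub_sub_nonpos hs hx

theorem IsNearestPoint.norm_sub_le_norm_sub_add_norm_smul_sub {α : ℝ} {h v : E}
    (hp : IsNearestPoint s (x - α • h) p) (hq : IsNearestPoint s (x - α • v) q)
    (hs : Convex ℝ s) : ‖x - q‖ ≤ ‖p - x‖ + ‖α • (h - v)‖ :=
  calc ‖x - q‖ ≤ ‖x - p‖ + ‖p - q‖ := norm_sub_le_norm_sub_add_norm_sub x p q
    _ ≤ ‖x - p‖ + ‖x - α • h - (x - α • v)‖ := by
      gcongr
      exact hp.norm_sub_le_norm_sub hq hs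
    _ = ‖p - x‖ + ‖α • (h - v)‖ := by
      rw [norm_sub_rev x p, sub_sub_sub_cancel_left, ← smul_sub, ← neg_sub h v, smul_neg, norm_neg]

end NearestPoint

section Smooth

variable {E : Type*} [NormedAddCommGroup E] [InnerProductSpace ℝ E] {s : Set E} {g : E → E}
  {L : ℝ≥0} {x y : E}

theorem inner_lineMap_sub_le_of_lipschitzOnWith (hs : Convex ℝ s) (hg : LipschitzOnWith L g s)
    (hx : x ∈ s) (hy : y ∈ s) {t : ℝ} (ht : t ∈ Set.Icc (0 : ℝ) 1) :
    ⟪g (AffineMap.lineMap x y t) - g x, y - x⟫ ≤ L * ‖y - x‖ ^ 2 * t :=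
  calc ⟪g (AffineMap.lineMap x y t) - g x, y - x⟫
      ≤ ‖g (AffineMap.lineMap x y t) - g x‖ * ‖y - x‖ := real_inner_le_norm _ _
    _ ≤ L * (t * ‖y - x‖) * ‖y - x‖ := by
      gcongr
      have hlip := hg.dist_le_mul _ (hs.lineMap_mem hx hy ht) _ hx
      rwa [dist_lineMap_left, Real.norm_of_nonneg ht.1, dist_comm x y, dist_eq_norm,
        dist_eq_norm] at hlip
    _ = L * ‖y - x‖ ^ 2 * t := by ring

variable [CompleteSpace E] {F : E → ℝ}

theorem hasDerivWithinAt_comp_lineMap_of_hasGradientWithinAt (hs : Convex ℝ s)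
    (hx : x ∈ s) (hy : y ∈ s) {v : E} {t : ℝ}
    (hF : HasGradientWithinAt F v s (AffineMap.lineMap x y t)) :
    HasDerivWithinAt (fun r : ℝ ↦ F (AffineMap.lineMap x y r)) ⟪v, y - x⟫ (Set.Icc 0 1) t :=
  hF.hasFDerivWithinAt.comp_hasDerivWithinAt t AffineMap.hasDerivWithinAt_lineMap
    fun _ hr ↦ hs.lineMap_mem hx hy hr

theorem le_add_inner_add_of_lipschitzOnWith_gradient (hs : Convex ℝ s)
    (hF : ∀ z ∈ s, HasGradientWithinAt F (g z) s z) (hg : LipschitzOnWith L g s)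
    (hx : x ∈ s) (hy : y ∈ s) :
    F y ≤ F x + ⟪g x, y - x⟫ + L / 2 * ‖y - x‖ ^ 2 := by
  let B : ℝ → ℝ := fun t ↦ F x + ⟪g x, y - x⟫ * t + L / 2 * ‖y - x‖ ^ 2 * t ^ 2
  have hB (t : ℝ) : HasDerivAt B (⟪g x, y - x⟫ + L * ‖y - x‖ ^ 2 * t) t := by
    refine ((((hasDerivAt_id t).const_mul _).const_add _).add
      (((hasDerivAt_id t).pow 2).const_mul _)).congr_deriv ?_
    simp only [id_eq]
    ring
  have hline {t : ℝ} (ht : t ∈ Set.Icc (0 : ℝ) 1) :=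
    hasDerivWithinAt_comp_lineMap_of_hasGradientWithinAt hs hx hy
      (hF _ (hs.lineMap_mem hx hy ht))
  have hle := image_le_of_deriv_right_le_deriv_boundary
    (fun t ht ↦ (hline ht).continuousWithinAt)
    (fun t ht ↦ (hline (Set.Ico_subset_Icc_self ht)).mono_of_mem_nhdsWithin
      (Icc_mem_nhdsGE_of_mem ht))
    (B := B) (by simp [B]) (fun t _ ↦ (hB t).continuousAt.continuousWithinAt)
    (fun t _ ↦ (hB t).hasDerivWithinAt)
    (fun t ht ↦ by
      have := inner_lineMap_sub_le_of_lipschitzOnWith hs hg hx hy (Set.Ico_subset_Icc_self ht)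
      rw [inner_sub_left] at this
      linarith)
    (Set.right_mem_Icc.2 zero_le_one)
  simpa [B] using hle

end Smooth

section ProjectedGradient

/-- The gradient mapping of a projected gradient method at `x`, for the projection `P`, the gradient
field `g` and the stepsize `α`: the displacement of `x` under one exact step, divided by `-α`. -/
noncomputable def gradientMapping {E : Type*} [AddCommGroup E] [Module ℝ E]
    (P g : E → E) (α : ℝ) (x : E) : E :=
  α⁻¹ • (x - P (x - α • g x))

variable {E : Type*} [NormedAddCommGroup E] [InnerProductSpace ℝ E] [CompleteSpace E]
  {s : Set E} {P : E → E} {F : E → ℝ} {g : E → E} {L : ℝ≥0} {α : ℝ}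

theorem IsNearestPoint.sq_norm_sub_le_of_lipschitzOnWith_gradient {x x' h : E}
    (hx' : IsNearestPoint s (x - α • h) x') (hs : Convex ℝ s)
    (hF : ∀ z ∈ s, HasGradientWithinAt F (g z) s z) (hg : LipschitzOnWith L g s)
    (hα : 0 ≤ α) (hαL : α * L ≤ 1) (hx : x ∈ s) :
    ‖x' - x‖ ^ 2 ≤ 4 * α * (F x - F x') + 4 * ‖α • (h - g x)‖ ^ 2 := by
  have hangle := hx'.sq_norm_sub_add_inner_nonpos hs hx
  have hdescent := mul_le_mul_of_nonneg_left
    (le_add_inner_add_of_lipschitzOnWith_gradient hs hF hg hx hx'.1) hα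
  have hcurv : α * L * ‖x' - x‖ ^ 2 ≤ ‖x' - x‖ ^ 2 :=
    mul_le_of_le_one_left (sq_nonneg _) hαL
  have hsplit : ⟪α • (h - g x), x' - x⟫ = α * ⟪h, x' - x⟫ - α * ⟪g x, x' - x⟫ := by
    rw [real_inner_smul_left, inner_sub_left, mul_sub]
  have hyoung : -⟪α • (h - g x), x' - x⟫ ≤ ‖α • (h - g x)‖ ^ 2 + ‖x' - x‖ ^ 2 / 4 := by
    have hcs := neg_le_of_abs_le (abs_real_inner_le_norm (α • (h - g x)) (x' - x))
    linarith [sq_nonneg (‖α • (h - g x)‖ - ‖x' - x‖ / 2)]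
  linarith

theorem sq_norm_gradientMapping_le (hP : ∀ x, IsNearestPoint s x (P x)) (hs : Convex ℝ s)
    (hF : ∀ z ∈ s, HasGradientWithinAt F (g z) s z) (hg : LipschitzOnWith L g s)
    (hα : 0 < α) (hαL : α * L ≤ 1) {x : E} (hx : x ∈ s) (h : E) :
    ‖gradientMapping P g α x‖ ^ 2 ≤
      8 / α * (F x - F (P (x - α • h))) + 10 * ‖h - g x‖ ^ 2 := by
  set x' := P (x - α • h)
  have hx' : IsNearestPoint s (x - α • h) x' := hP _
  have hdecrease := hx'.sq_norm_sub_le_of_lipschitzOnWith_gradient hs hF hg hα.le hαL hx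
  have hnorm (v : E) : ‖α • v‖ ^ 2 = α ^ 2 * ‖v‖ ^ 2 := by
    rw [norm_smul, mul_pow, Real.norm_eq_abs, sq_abs]
  refine le_of_mul_le_mul_left ?_ (pow_pos hα 2)
  calc α ^ 2 * ‖gradientMapping P g α x‖ ^ 2 = ‖x - P (x - α • g x)‖ ^ 2 := by
        rw [← hnorm, gradientMapping, smul_inv_smul₀ hα.ne']
    _ ≤ (‖x' - x‖ + ‖α • (h - g x)‖) ^ 2 := by
        gcongr
        exact hx'.norm_sub_le_norm_sub_add_norm_smul_sub (hP _) hs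
    _ ≤ 2 * (‖x' - x‖ ^ 2 + ‖α • (h - g x)‖ ^ 2) := add_sq_le
    _ ≤ 8 * α * (F x - F x') + 10 * ‖α • (h - g x)‖ ^ 2 := by linarith
    _ = α ^ 2 * (8 / α * (F x - F x') + 10 * ‖h - g x‖ ^ 2) := by
        rw [hnorm]
        field_simp

theorem sum_sq_norm_gradientMapping_le (hP : ∀ x, IsNearestPoint s x (P x)) (hs : Convex ℝ s)
    (hF : ∀ z ∈ s, HasGradientWithinAt F (g z) s z) (hg : LipschitzOnWith L g s)
    (hα : 0 < α) (hαL : α * L ≤ 1) {h θ : ℕ → E} (hθ0 : θ 0 ∈ s)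
    (hθ : ∀ t, θ (t + 1) = P (θ t - α • h t)) {c : ℝ} (hc : c ∈ lowerBounds (F '' s)) (T : ℕ) :
    ∑ t ∈ range T, ‖gradientMapping P g α (θ t)‖ ^ 2 ≤
      8 / α * (F (θ 0) - c) + 10 * ∑ t ∈ range T, ‖h t - g (θ t)‖ ^ 2 := by
  have hmem : ∀ t, θ t ∈ s
    | 0 => hθ0
    | t + 1 => hθ t ▸ (hP _).1
  have hcT : c ≤ F (θ T) := hc (Set.mem_image_of_mem F (hmem T))
  calc ∑ t ∈ range T, ‖gradientMapping P g α (θ t)‖ ^ 2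
      ≤ ∑ t ∈ range T,
          (8 / α * (F (θ t) - F (θ (t + 1))) + 10 * ‖h t - g (θ t)‖ ^ 2) :=
        sum_le_sum fun t _ ↦
          hθ t ▸ sq_norm_gradientMapping_le hP hs hF hg hα hαL (hmem t) (h t)
    _ = 8 / α * (F (θ 0) - F (θ T)) + 10 * ∑ t ∈ range T, ‖h t - g (θ t)‖ ^ 2 := by
        rw [sum_add_distrib, ← mul_sum, ← mul_sum, sum_range_sub' (fun t ↦ F (θ t))]
    _ ≤ 8 / α * (F (θ 0) - c) + 10 * ∑ t ∈ range T, ‖h t - g (θ t)‖ ^ 2 := by gcongr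

theorem inexact_projected_gradient_descent_general (hP : ∀ x, IsNearestPoint s x (P x))
    (hs : Convex ℝ s) (hF : ∀ z ∈ s, HasGradientWithinAt F (g z) s z)
    (hg : LipschitzOnWith L g s) (hα : 0 < α) (hαL : α * L ≤ 1) {h θ : ℕ → E} (hθ0 : θ 0 ∈ s)
    (hθ : ∀ t, θ (t + 1) = P (θ t - α • h t)) {c : ℝ} (hc : c ∈ lowerBounds (F '' s))
    {T : ℕ} (hT : 1 ≤ T) :
    (1 / (T : ℝ)) * ∑ t ∈ range T, ‖gradientMapping P g α (θ t)‖ ^ 2 ≤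
      8 * (F (θ 0) - c) / (α * (T : ℝ)) +
        (10 / (T : ℝ)) * ∑ t ∈ range T, ‖h t - g (θ t)‖ ^ 2 :=
  calc (1 / (T : ℝ)) * ∑ t ∈ range T, ‖gradientMapping P g α (θ t)‖ ^ 2
      ≤ (1 / (T : ℝ)) *
          (8 / α * (F (θ 0) - c) + 10 * ∑ t ∈ range T, ‖h t - g (θ t)‖ ^ 2) := by
        gcongr
        exact sum_sq_norm_gradientMapping_le hP hs hF hg hα hαL hθ0 hθ hc T
    _ = 8 * (F (θ 0) - c) / (α * (T : ℝ)) +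
          (10 / (T : ℝ)) * ∑ t ∈ range T, ‖h t - g (θ t)‖ ^ 2 := by
        have : (T : ℝ) ≠ 0 := by positivity
        field_simp

end ProjectedGradient

/-- **Convergence of inexact projected gradient descent to near-stationarity.**
For a nonempty compact convex `Θ ⊆ ℝ^m` with metric projection `P`, a function `F`
differentiable at every point of `Θ` whose gradient is `L`-Lipschitz on `Θ`,
`Fstar = inf_Θ F`, a stepsize `0 < α ≤ 1/L`, iterates `θ (t+1) = P (θ t - α • hhat t)`
started in `Θ`, hyper-gradient errors `e t = hhat t - ∇F (θ t)` and gradient mapping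
`G t = α⁻¹ • (θ t - P (θ t - α • ∇F (θ t)))`, the average squared gradient mapping
is bounded as stated, for every `T ≥ 1`. -/
theorem inexact_projected_gradient_descent
    {m : ℕ}
    (Θ : Set (EuclideanSpace ℝ (Fin m)))
    (hΘne : Θ.Nonempty) (hΘcpt : IsCompact Θ) (hΘconv : Convex ℝ Θ)
    (P : EuclideanSpace ℝ (Fin m) → EuclideanSpace ℝ (Fin m))
    (hP : ∀ x, P x ∈ Θ ∧ ∀ y ∈ Θ, ‖x - P x‖ ≤ ‖x - y‖)
    (F : EuclideanSpace ℝ (Fin m) → ℝ)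
    (hFdiff : ∀ θ ∈ Θ, DifferentiableAt ℝ F θ)
    (L : ℝ) (hL : 0 < L)
    (hlip : ∀ θ ∈ Θ, ∀ θ' ∈ Θ, ‖gradient F θ - gradient F θ'‖ ≤ L * ‖θ - θ'‖)
    (Fstar : ℝ) (hFstar : Fstar = sInf (F '' Θ))
    (α : ℝ) (hα0 : 0 < α) (hα : α ≤ 1 / L)
    (hhat : ℕ → EuclideanSpace ℝ (Fin m))
    (θ : ℕ → EuclideanSpace ℝ (Fin m))
    (hθ0 : θ 0 ∈ Θ)
    (hθrec : ∀ t, θ (t + 1) = P (θ t - α • hhat t))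
    (e : ℕ → EuclideanSpace ℝ (Fin m))
    (he : ∀ t, e t = hhat t - gradient F (θ t))
    (G : ℕ → EuclideanSpace ℝ (Fin m))
    (hG : ∀ t, G t = α⁻¹ • (θ t - P (θ t - α • gradient F (θ t)))) :
    ∀ T : ℕ, 1 ≤ T →
      (1 / (T : ℝ)) * ∑ t ∈ Finset.range T, ‖G t‖ ^ 2 ≤
        8 * (F (θ 0) - Fstar) / (α * (T : ℝ)) +
          (10 / (T : ℝ)) * ∑ t ∈ Finset.range T, ‖e t‖ ^ 2 := by
  intro T hT
  obtain rfl : e = fun t ↦ hhat t - gradient F (θ t) := funext he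
  obtain rfl : G = fun t ↦ gradientMapping P (gradient F) α (θ t) := funext hG
  lift L to ℝ≥0 using hL.le
  have hbdd : BddBelow (F '' Θ) :=
    hΘcpt.bddBelow_image fun x hx ↦ (hFdiff x hx).continuousAt.continuousWithinAt
  exact inexact_projected_gradient_descent_general hP hΘconv
    (fun x hx ↦ (hFdiff x hx).hasGradientAt.hasFDerivAt.hasFDerivWithinAt)
    (LipschitzOnWith.of_dist_le_mul <| by simpa only [dist_eq_norm] using hlip)
    hα0 ((le_div_iff₀ hL).1 hα) hθ0 hθrec
    (hFstar ▸ (isGLB_csInf (hΘne.image F) hbdd).1) hT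
end

section
/- No σ-uniform Polyak–Łojasiewicz constant for the penalized objective: Let f, g : ℝ^d → ℝ be differentiable, let U ⊆ ℝ^d be a set, let σ > 0, and set h_σ := g + σ f (so ∇h_σ = ∇g + σ∇f). Suppose x⋆, x̄ ∈ U satisfy ∇g(x̄) = 0, g(x̄) = g(x⋆), and f(x̄) > f(x⋆). If h_σ satisfies on U a Polyak–Łojasiewicz inequality with constant μ_σ > 0, namely h_σ(x) − inf_{y∈U} h_σ(y) ≤ (2 μ_σ)^{-1} ‖∇h_σ(x)‖² for all x ∈ U, where the infimum is finite, then μ_σ ≤ (σ/2) · ‖∇f(x̄)‖² / (f(x̄) − f(x⋆)). In particular μ_σ = O(σ) as σ ↓ 0, so no PL constant bounded away from 0 can hold uniformly over σ ∈ (0, σ₀] on any set U containing both x⋆ and x̄. -/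
/-!
A point `y ∈ U` with `h y < h x` bounds every PL constant of `h` on `U`: since `inf_U h ≤ h y`, the
inequality at `x` gives `h x - h y ≤ ‖∇h x‖² / (2μ)`. For `h = g + σ f` at a critical point of `g`,
the gap is of order `σ` while the squared gradient norm is of order `σ²`, so `μ` is at most of
order `σ`.
-/

open Set
open scoped Gradient ComplexConjugate

section Gradient

variable {𝕜 F : Type*} [RCLike 𝕜] [NormedAddCommGroup F] [InnerProductSpace 𝕜 F] [CompleteSpace F]
  {f g : F → 𝕜} {f' g' x : F}

theorem hasGradientAt_fun_add (hf : HasGradientAt f f' x) (hg : HasGradientAt g g' x) :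
    HasGradientAt (fun y ↦ f y + g y) (f' + g') x := by
  rw [hasGradientAt_iff_hasFDerivAt, map_add]
  exact hf.hasFDerivAt.add hg.hasFDerivAt

theorem hasGradientAt_const_mul (c : 𝕜) (hf : HasGradientAt f f' x) :
    HasGradientAt (fun y ↦ c * f y) (conj c • f') x := by
  rw [hasGradientAt_iff_hasFDerivAt, map_smulₛₗ, RCLike.conj_conj]
  exact hf.hasFDerivAt.const_mul c

theorem gradient_add_const_mul (c : 𝕜) (hg : DifferentiableAt 𝕜 g x)
    (hf : DifferentiableAt 𝕜 f x) :
    ∇ (fun y ↦ g y + c * f y) x = ∇ g x + conj c • ∇ f x :=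
  (hasGradientAt_fun_add hg.hasGradientAt (hasGradientAt_const_mul c hf.hasGradientAt)).gradient

end Gradient

section PolyakLojasiewicz

variable {F : Type*} [NormedAddCommGroup F] [InnerProductSpace ℝ F] [CompleteSpace F]

/-- The Polyak–Łojasiewicz inequality for `h` relative to `U` with constant `μ`, at the single
point `x`; the PL inequality on `U` is this property at all points of `U`. The real-valued `sInf`
is the intended infimum only if `h '' U` is nonempty and bounded below. -/
def PolyakLojasiewiczAt (h : F → ℝ) (U : Set F) (μ : ℝ) (x : F) : Prop :=
  h x - sInf (h '' U) ≤ (2 * μ)⁻¹ * ‖∇ h x‖ ^ 2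

theorem PolyakLojasiewiczAt.le_norm_gradient_sq_div {h : F → ℝ} {U : Set F} {μ : ℝ} {x y : F}
    (hPL : PolyakLojasiewiczAt h U μ x) (hμ : 0 < μ) (hbdd : BddBelow (h '' U)) (hy : y ∈ U)
    (hlt : h y < h x) :
    μ ≤ ‖∇ h x‖ ^ 2 / (2 * (h x - h y)) := by
  have hgap : h x - h y ≤ (2 * μ)⁻¹ * ‖∇ h x‖ ^ 2 :=
    (sub_le_sub_left (csInf_le hbdd (mem_image_of_mem h hy)) _).trans hPL
  rw [le_inv_mul_iff₀ (by positivity)] at hgap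
  rw [le_div_iff₀ (mul_pos two_pos (sub_pos.2 hlt))]
  linarith

theorem no_sigma_uniform_PL_general {f g : F → ℝ} {U : Set F} {σ μ : ℝ} {xstar xbar : F}
    (hf : DifferentiableAt ℝ f xbar) (hg : DifferentiableAt ℝ g xbar) (hσ : 0 < σ)
    (hxstar : xstar ∈ U) (hgradzero : ∇ g xbar = 0) (hgle : g xstar ≤ g xbar)
    (hflt : f xstar < f xbar) (hμ : 0 < μ) (hbdd : BddBelow ((fun y ↦ g y + σ * f y) '' U))
    (hPL : PolyakLojasiewiczAt (fun y ↦ g y + σ * f y) U μ xbar) :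
    μ ≤ σ / 2 * ‖∇ f xbar‖ ^ 2 / (f xbar - f xstar) := by
  set h : F → ℝ := fun y ↦ g y + σ * f y with hh
  have hgrad : ‖∇ h xbar‖ = σ * ‖∇ f xbar‖ := by
    rw [hh, gradient_add_const_mul σ hg hf, hgradzero, zero_add, conj_trivial, norm_smul,
      Real.norm_of_nonneg hσ.le]
  have hfgap : 0 < f xbar - f xstar := sub_pos.2 hflt
  have hgap : σ * (f xbar - f xstar) ≤ h xbar - h xstar := by
    simp only [hh]
    linarith
  have hlt : h xstar < h xbar := sub_pos.1 ((mul_pos hσ hfgap).trans_le hgap)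
  calc
    μ ≤ ‖∇ h xbar‖ ^ 2 / (2 * (h xbar - h xstar)) :=
      hPL.le_norm_gradient_sq_div hμ hbdd hxstar hlt
    _ ≤ ‖∇ h xbar‖ ^ 2 / (2 * (σ * (f xbar - f xstar))) := by gcongr
    _ = σ / 2 * ‖∇ f xbar‖ ^ 2 / (f xbar - f xstar) := by
      rw [hgrad]
      field_simp

end PolyakLojasiewicz

/-- **No σ-uniform Polyak–Łojasiewicz constant for the penalized objective.**
Let `f, g : ℝ^d → ℝ` be differentiable, `U ⊆ ℝ^d`, `σ > 0`, and consider
`h_σ = g + σ f`. If `xstar, xbar ∈ U` satisfy `∇g xbar = 0`, `g xbar = g xstar` and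
`f xbar > f xstar`, and `h_σ` satisfies a PL inequality on `U` with constant `μ > 0`
(with finite infimum), then `μ ≤ (σ/2) ‖∇f xbar‖² / (f xbar - f xstar)`. -/
theorem no_sigma_uniform_PL
    {d : ℕ}
    (f g : EuclideanSpace ℝ (Fin d) → ℝ)
    (hf : Differentiable ℝ f) (hg : Differentiable ℝ g)
    (U : Set (EuclideanSpace ℝ (Fin d)))
    (σ : ℝ) (hσ : 0 < σ)
    (xstar xbar : EuclideanSpace ℝ (Fin d))
    (hxstar : xstar ∈ U) (hxbar : xbar ∈ U)
    (hgradzero : gradient g xbar = 0)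
    (hgeq : g xbar = g xstar)
    (hflt : f xstar < f xbar)
    (μ : ℝ) (hμ : 0 < μ)
    (hbdd : BddBelow ((fun y => g y + σ * f y) '' U))
    (hPL : ∀ x ∈ U, (g x + σ * f x) - sInf ((fun y => g y + σ * f y) '' U) ≤
      (2 * μ)⁻¹ * ‖gradient (fun y => g y + σ * f y) x‖ ^ 2) :
    μ ≤ σ / 2 * ‖gradient f xbar‖ ^ 2 / (f xbar - f xstar) :=
  no_sigma_uniform_PL_general (hf xbar) (hg xbar) hσ hxstar hgradzero hgeq.ge hflt hμ hbdd
    (hPL xbar hxbar)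
end

section
/- Tube bounds for candidates with χ²/order-2-Rényi-controlled marginals: Let S ⊆ ℝ^d be nonempty, let λ > 0, and let μ be a Borel probability measure on ℝ^d satisfying the tube tail bound μ({x : dist(x,S) ≥ t}) ≤ C exp(−c t² / λ) for every t ≥ 0, with constants C > 0 and c > 0. Let M ≥ 1 and let X₁, …, X_M be random vectors (on a common probability space, not necessarily independent) whose laws ν₁, …, ν_M are absolutely continuous with respect to μ and satisfy ∫ (dν_i/dμ)² dμ ≤ exp(ε²) for every i, for some ε ≥ 0. Then: (i) for every t ≥ 0, P( max_{1≤i≤M} dist(X_i, S) ≥ t ) ≤ M e^{ε²/2} √C exp(−(c/2) t² / λ); (ii) there exist constants C₁ and C₂, depending only on C and c, such that E[ max_{1≤i≤M} dist(X_i, S) ] ≤ C₁ e^{ε²/2} √(λ log(1+M)) and E[ max_{1≤i≤M} dist(X_i, S)² ] ≤ C₂ e^{ε²/2} λ log(1+M). -/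
open MeasureTheory Metric

/-!
By Cauchy–Schwarz, `ν A = ∫_A (dν/dμ) dμ ≤ (∫ (dν/dμ)² dμ)^(1/2) (μ A)^(1/2)`, so a Gaussian tail
under `μ` becomes a Gaussian tail under `ν` with half the rate and the factor `e^{ε²/2} √C`. A union
bound costs a factor `M`. Integrating the resulting tail of the squared maximum, with the trivial
bound `1` up to the level where `M` is absorbed, that is `log (1 + M)` over the rate, bounds the
second moment, and the first moment follows from `(E Z)² ≤ E Z²`.
-/

section ChangeOfMeasure

variable {E : Type*} [MeasurableSpace E] {μ ν : Measure E}

theorem measure_le_lintegral_rnDeriv_sq_rpow_mul [ν.HaveLebesgueDecomposition μ] [SFinite μ]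
    (hνμ : ν ≪ μ) (A : Set E) :
    ν A ≤ (∫⁻ x, ν.rnDeriv μ x ^ 2 ∂μ) ^ (1 / 2 : ℝ) * μ A ^ (1 / 2 : ℝ) := by
  have cauchy_schwarz := ENNReal.lintegral_mul_le_Lp_mul_Lq (μ.restrict A)
    Real.HolderConjugate.two_two (Measure.measurable_rnDeriv ν μ).aemeasurable
    (aemeasurable_const (b := 1))
  calc ν A = ∫⁻ x in A, ν.rnDeriv μ x ∂μ := (Measure.setLIntegral_rnDeriv hνμ A).symm
    _ ≤ (∫⁻ x in A, ν.rnDeriv μ x ^ 2 ∂μ) ^ (1 / 2 : ℝ) * μ A ^ (1 / 2 : ℝ) := by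
      simpa using cauchy_schwarz
    _ ≤ (∫⁻ x, ν.rnDeriv μ x ^ 2 ∂μ) ^ (1 / 2 : ℝ) * μ A ^ (1 / 2 : ℝ) := by
      gcongr
      exact Measure.restrict_le_self

theorem measure_le_exp_half_of_lintegral_rnDeriv_sq_le [ν.HaveLebesgueDecomposition μ] [SFinite μ]
    (hνμ : ν ≪ μ) {a C u : ℝ} (hC : 0 ≤ C)
    (hrenyi : ∫⁻ x, ν.rnDeriv μ x ^ 2 ∂μ ≤ ENNReal.ofReal (Real.exp a)) {A : Set E}
    (hA : μ A ≤ ENNReal.ofReal (C * Real.exp u)) :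
    ν A ≤ ENNReal.ofReal (Real.exp (a / 2) * √C * Real.exp (u / 2)) := by
  calc ν A ≤ (∫⁻ x, ν.rnDeriv μ x ^ 2 ∂μ) ^ (1 / 2 : ℝ) * μ A ^ (1 / 2 : ℝ) :=
        measure_le_lintegral_rnDeriv_sq_rpow_mul hνμ A
    _ ≤ ENNReal.ofReal (Real.exp a) ^ (1 / 2 : ℝ)
          * ENNReal.ofReal (C * Real.exp u) ^ (1 / 2 : ℝ) := by gcongr
    _ = ENNReal.ofReal (√(Real.exp a) * √(C * Real.exp u)) := by
      rw [ENNReal.ofReal_rpow_of_nonneg (by positivity) (by positivity),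
        ENNReal.ofReal_rpow_of_nonneg (by positivity) (by positivity),
        ← ENNReal.ofReal_mul (by positivity), Real.sqrt_eq_rpow, Real.sqrt_eq_rpow]
    _ = ENNReal.ofReal (Real.exp (a / 2) * √C * Real.exp (u / 2)) := by
      rw [Real.sqrt_mul hC, Real.exp_half, Real.exp_half, mul_assoc]

end ChangeOfMeasure

theorem measure_le_iSup_le_card_mul {Ω ι : Type*} [MeasurableSpace Ω] [Fintype ι] [Nonempty ι]
    {P : Measure Ω} {Y : ι → Ω → ℝ} {t B : ℝ}
    (hY : ∀ i, P {ω | t ≤ Y i ω} ≤ ENNReal.ofReal B) :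
    P {ω | t ≤ ⨆ i, Y i ω} ≤ ENNReal.ofReal (Fintype.card ι * B) := by
  have hsub : {ω | t ≤ ⨆ i, Y i ω} ⊆ ⋃ i, {ω | t ≤ Y i ω} := fun ω hω => by
    obtain ⟨i, hi⟩ := exists_eq_ciSup_of_finite (f := fun i => Y i ω)
    exact Set.mem_iUnion.2 ⟨i, hω.trans_eq hi.symm⟩
  calc P {ω | t ≤ ⨆ i, Y i ω} ≤ ∑ i, P {ω | t ≤ Y i ω} :=
        (measure_mono hsub).trans (measure_iUnion_fintype_le _ _)
    _ ≤ ∑ _i : ι, ENNReal.ofReal B := Finset.sum_le_sum fun i _ => hY i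
    _ = ENNReal.ofReal (Fintype.card ι * B) := by
      rw [Finset.sum_const, Finset.card_univ, ← ENNReal.ofReal_nsmul, nsmul_eq_mul]

theorem lintegral_Ioi_ofReal_mul_exp_neg {K b : ℝ} (hK : 0 ≤ K) (hb : 0 < b) (s : ℝ) :
    ∫⁻ t in Set.Ioi s, ENNReal.ofReal (K * Real.exp (-b * t)) =
      ENNReal.ofReal (K * (Real.exp (-b * s) / b)) := by
  have hint : IntegrableOn (fun t => K * Real.exp (-b * t)) (Set.Ioi s) :=
    (integrableOn_exp_mul_Ioi (neg_lt_zero.2 hb) s).const_mul K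
  rw [← ofReal_integral_eq_lintegral_ofReal hint (.of_forall fun t => by positivity),
    integral_const_mul, integral_exp_mul_Ioi (neg_lt_zero.2 hb), neg_div_neg_eq]

theorem exp_tail_sq_of_gaussian_tail {Ω : Type*} [MeasurableSpace Ω] {P : Measure Ω}
    {Z : Ω → ℝ} (hZ0 : ∀ ω, 0 ≤ Z ω) {K b : ℝ}
    (htail : ∀ t, 0 ≤ t → P {ω | t ≤ Z ω} ≤ ENNReal.ofReal (K * Real.exp (-b * t ^ 2)))
    {t : ℝ} (ht : 0 ≤ t) :
    P {ω | t ≤ Z ω ^ 2} ≤ ENNReal.ofReal (K * Real.exp (-b * t)) := by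
  simpa only [Real.sqrt_le_left (hZ0 _), Real.sq_sqrt ht] using htail (√t) t.sqrt_nonneg

section Moments

variable {Ω : Type*} [MeasurableSpace Ω] {P : Measure Ω} [IsProbabilityMeasure P]

theorem lintegral_le_of_exp_tail {Y : Ω → ℝ} (hY : AEMeasurable Y P) (hY0 : 0 ≤ᵐ[P] Y)
    {K b s : ℝ} (hK : 0 ≤ K) (hb : 0 < b) (hs : 0 ≤ s)
    (htail : ∀ t, 0 ≤ t → P {ω | t ≤ Y ω} ≤ ENNReal.ofReal (K * Real.exp (-b * t))) :
    ∫⁻ ω, ENNReal.ofReal (Y ω) ∂P ≤ ENNReal.ofReal (s + K * (Real.exp (-b * s) / b)) := by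
  have hlow : ∫⁻ t in Set.Ioc 0 s, P {ω | t ≤ Y ω} ≤ ENNReal.ofReal s :=
    (lintegral_mono fun _ => prob_le_one).trans_eq (by simp)
  have hhigh : ∫⁻ t in Set.Ioi s, P {ω | t ≤ Y ω} ≤
      ENNReal.ofReal (K * (Real.exp (-b * s) / b)) := by
    rw [← lintegral_Ioi_ofReal_mul_exp_neg hK hb]
    exact setLIntegral_mono (by fun_prop) fun t hst => htail t (hs.trans hst.le)
  rw [lintegral_eq_lintegral_meas_le P hY0 hY, ← Set.Ioc_union_Ioi_eq_Ioi hs,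
    ENNReal.ofReal_add hs (by positivity)]
  exact (lintegral_union_le _ _ _).trans (add_le_add hlow hhigh)

theorem integrable_of_exp_tail {Y : Ω → ℝ} (hY : AEMeasurable Y P) (hY0 : 0 ≤ᵐ[P] Y)
    {K b : ℝ} (hK : 0 ≤ K) (hb : 0 < b)
    (htail : ∀ t, 0 ≤ t → P {ω | t ≤ Y ω} ≤ ENNReal.ofReal (K * Real.exp (-b * t))) :
    Integrable Y P :=
  ⟨hY.aestronglyMeasurable, (hasFiniteIntegral_iff_ofReal hY0).2 <|
    (lintegral_le_of_exp_tail hY hY0 hK hb le_rfl htail).trans_lt ENNReal.ofReal_lt_top⟩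

theorem integral_le_log_of_exp_tail {Y : Ω → ℝ} (hY : AEMeasurable Y P) (hY0 : 0 ≤ᵐ[P] Y)
    {m K b : ℝ} (hm : 0 ≤ m) (hK : 0 ≤ K) (hb : 0 < b)
    (htail : ∀ t, 0 ≤ t → P {ω | t ≤ Y ω} ≤ ENNReal.ofReal (m * K * Real.exp (-b * t))) :
    ∫ ω, Y ω ∂P ≤ (Real.log (1 + m) + K) / b := by
  have hlog : 0 ≤ Real.log (1 + m) := Real.log_nonneg (by linarith)
  have hcut := lintegral_le_of_exp_tail hY hY0 (by positivity) hb
    (div_nonneg hlog hb.le) htail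
  have hexp : Real.exp (-b * (Real.log (1 + m) / b)) = (1 + m)⁻¹ := by
    rw [neg_mul, mul_div_cancel₀ _ hb.ne', Real.exp_neg, Real.exp_log (by positivity)]
  have hfrac : m * (1 + m)⁻¹ ≤ 1 := mul_inv_le_one_of_le₀ (by linarith) (by positivity)
  rw [integral_eq_lintegral_of_nonneg_ae hY0 hY.aestronglyMeasurable]
  refine ENNReal.toReal_le_of_le_ofReal (by positivity) (hcut.trans (ENNReal.ofReal_le_ofReal ?_))
  calc Real.log (1 + m) / b + m * K * (Real.exp (-b * (Real.log (1 + m) / b)) / b)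
      = (Real.log (1 + m) + m * (1 + m)⁻¹ * K) / b := by rw [hexp]; ring
    _ ≤ (Real.log (1 + m) + K) / b := by
      gcongr
      exact mul_le_of_le_one_left hK hfrac

theorem integral_le_sqrt_integral_sq {Z : Ω → ℝ} (hZ : MemLp Z 2 P) :
    ∫ ω, Z ω ∂P ≤ √(∫ ω, Z ω ^ 2 ∂P) := by
  have hvar := ProbabilityTheory.variance_nonneg Z P
  rw [ProbabilityTheory.variance_eq_sub hZ] at hvar
  exact Real.le_sqrt_of_sq_le (sub_nonneg.1 hvar)

theorem memLp_two_of_gaussian_tail {Z : Ω → ℝ} (hZ : AEMeasurable Z P) (hZ0 : ∀ ω, 0 ≤ Z ω)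
    {K b : ℝ} (hK : 0 ≤ K) (hb : 0 < b)
    (htail : ∀ t, 0 ≤ t → P {ω | t ≤ Z ω} ≤ ENNReal.ofReal (K * Real.exp (-b * t ^ 2))) :
    MemLp Z 2 P :=
  (memLp_two_iff_integrable_sq hZ.aestronglyMeasurable).2 <|
    integrable_of_exp_tail (hZ.pow_const 2) (.of_forall fun _ => sq_nonneg _) hK hb
      fun _ => exp_tail_sq_of_gaussian_tail hZ0 htail

theorem integral_sq_le_log_of_gaussian_tail {Z : Ω → ℝ} (hZ : AEMeasurable Z P)
    (hZ0 : ∀ ω, 0 ≤ Z ω) {m K b : ℝ} (hm : 0 ≤ m) (hK : 0 ≤ K) (hb : 0 < b)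
    (htail : ∀ t, 0 ≤ t → P {ω | t ≤ Z ω} ≤ ENNReal.ofReal (m * K * Real.exp (-b * t ^ 2))) :
    ∫ ω, Z ω ^ 2 ∂P ≤ (Real.log (1 + m) + K) / b :=
  integral_le_log_of_exp_tail (hZ.pow_const 2) (.of_forall fun _ => sq_nonneg _) hm hK hb
    fun _ => exp_tail_sq_of_gaussian_tail hZ0 htail

end Moments

section Candidates

/-- The constant `C₂` in the bound on the second moment of the maximal distance; its square root
serves as `C₁`. The `log 2` absorbs additive constants into `log (1 + M)`, as `M ≥ 1`. -/
noncomputable def secondMomentConst (C c : ℝ) : ℝ :=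
  2 / c * (1 + √C / Real.log 2)

theorem log_add_mul_sqrt_div_le {C c lam m r : ℝ} (hc : 0 < c) (hlam : 0 < lam)
    (hm : 1 ≤ m) (hr : 1 ≤ r) :
    (Real.log (1 + m) + r * √C) / (c / 2 / lam) ≤
      secondMomentConst C c * r * (lam * Real.log (1 + m)) := by
  have hlog2 : 0 < Real.log 2 := Real.log_pos one_lt_two
  have hlog : Real.log 2 ≤ Real.log (1 + m) := Real.log_le_log two_pos (by linarith)
  have hlog_le : Real.log (1 + m) ≤ r * Real.log (1 + m) :=
    le_mul_of_one_le_left (hlog2.le.trans hlog) hr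
  have hsqrt_le : r * √C ≤ r * √C * (Real.log (1 + m) / Real.log 2) :=
    le_mul_of_one_le_right (by positivity) ((one_le_div hlog2).2 hlog)
  calc (Real.log (1 + m) + r * √C) / (c / 2 / lam)
      ≤ (r * Real.log (1 + m) + r * √C * (Real.log (1 + m) / Real.log 2)) / (c / 2 / lam) := by
        gcongr
    _ = secondMomentConst C c * r * (lam * Real.log (1 + m)) := by
        rw [secondMomentConst]
        field_simp

theorem sqrt_mul_mul_le_mul_sqrt {D r x : ℝ} (hD : 0 ≤ D) (hr : 1 ≤ r) :
    √(D * r * x) ≤ √D * r * √x := by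
  have hr0 : 0 ≤ r := zero_le_one.trans hr
  rw [Real.sqrt_mul (mul_nonneg hD hr0), Real.sqrt_mul hD]
  gcongr
  exact (Real.sqrt_le_left hr0).2 (le_self_pow₀ hr two_ne_zero)

variable {E Ω ι : Type*} [MeasurableSpace E] [MeasurableSpace Ω] [Fintype ι] [Nonempty ι]
  {μ : Measure E} [SigmaFinite μ] {P : Measure Ω} [IsProbabilityMeasure P]
  {f : E → ℝ} {X : ι → Ω → E}

theorem measure_le_iSup_le_of_lintegral_rnDeriv_sq_le {C a t u : ℝ} (hC : 0 ≤ C)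
    (hX : ∀ i, AEMeasurable (X i) P) (hac : ∀ i, P.map (X i) ≪ μ)
    (hrenyi : ∀ i, ∫⁻ x, (P.map (X i)).rnDeriv μ x ^ 2 ∂μ ≤ ENNReal.ofReal (Real.exp a))
    (hμ : μ {x | t ≤ f x} ≤ ENNReal.ofReal (C * Real.exp u)) :
    P {ω | t ≤ ⨆ i, f (X i ω)} ≤
      ENNReal.ofReal (Fintype.card ι * (Real.exp (a / 2) * √C * Real.exp (u / 2))) :=
  measure_le_iSup_le_card_mul fun i => (Measure.le_map_apply (hX i) {x | t ≤ f x}).trans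
    (measure_le_exp_half_of_lintegral_rnDeriv_sq_le (hac i) hC (hrenyi i) hμ)

theorem tube_bounds_renyi_controlled_candidates_general {C c lam ε : ℝ} (hC : 0 ≤ C) (hc : 0 < c)
    (hlam : 0 < lam) (hf : AEMeasurable f μ) (hf0 : ∀ x, 0 ≤ f x)
    (hμ : ∀ t : ℝ, 0 ≤ t →
      μ {x | t ≤ f x} ≤ ENNReal.ofReal (C * Real.exp (-c * t ^ 2 / lam)))
    (hX : ∀ i, AEMeasurable (X i) P) (hac : ∀ i, P.map (X i) ≪ μ)
    (hrenyi : ∀ i, ∫⁻ x, (P.map (X i)).rnDeriv μ x ^ 2 ∂μ ≤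
      ENNReal.ofReal (Real.exp (ε ^ 2))) :
    (∀ t : ℝ, 0 ≤ t → P {ω | t ≤ ⨆ i, f (X i ω)} ≤
      ENNReal.ofReal (Fintype.card ι * Real.exp (ε ^ 2 / 2) * √C *
        Real.exp (-(c / 2) * t ^ 2 / lam))) ∧
    (∫ ω, (⨆ i, f (X i ω)) ∂P ≤
      √(secondMomentConst C c) * Real.exp (ε ^ 2 / 2) *
        √(lam * Real.log (1 + Fintype.card ι))) ∧
    (∫ ω, (⨆ i, f (X i ω)) ^ 2 ∂P ≤
      secondMomentConst C c * Real.exp (ε ^ 2 / 2) *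
        (lam * Real.log (1 + Fintype.card ι))) := by
  have htail (t : ℝ) (ht : 0 ≤ t) : P {ω | t ≤ ⨆ i, f (X i ω)} ≤
      ENNReal.ofReal (Fintype.card ι * (Real.exp (ε ^ 2 / 2) * √C) *
        Real.exp (-(c / 2 / lam) * t ^ 2)) := by
    convert measure_le_iSup_le_of_lintegral_rnDeriv_sq_le hC hX hac hrenyi (hμ t ht) using 2
    ring_nf
  have hsup : AEMeasurable (fun ω => ⨆ i, f (X i ω)) P :=
    .iSup fun i => (hf.mono_ac (hac i)).comp_aemeasurable (hX i)
  have hsup0 (ω : Ω) : 0 ≤ ⨆ i, f (X i ω) := Real.iSup_nonneg fun i => hf0 _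
  have hexp : 1 ≤ Real.exp (ε ^ 2 / 2) := Real.one_le_exp (by positivity)
  have hcard : (1 : ℝ) ≤ Fintype.card ι := Nat.one_le_cast.2 Fintype.card_pos
  have hsecond := (integral_sq_le_log_of_gaussian_tail hsup hsup0 (by positivity) (by positivity)
    (by positivity) htail).trans (log_add_mul_sqrt_div_le hc hlam hcard hexp)
  refine ⟨fun t ht => (htail t ht).trans_eq (by ring_nf), ?_, hsecond⟩
  have hD : 0 ≤ secondMomentConst C c := by rw [secondMomentConst]; positivity
  calc ∫ ω, (⨆ i, f (X i ω)) ∂P ≤ √(∫ ω, (⨆ i, f (X i ω)) ^ 2 ∂P) :=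
        integral_le_sqrt_integral_sq <|
          memLp_two_of_gaussian_tail hsup hsup0 (by positivity) (by positivity) htail
    _ ≤ √(secondMomentConst C c * Real.exp (ε ^ 2 / 2) *
          (lam * Real.log (1 + Fintype.card ι))) := Real.sqrt_le_sqrt hsecond
    _ ≤ _ := sqrt_mul_mul_le_mul_sqrt hD hexp

end Candidates

/-- **Tube bounds for candidates with order-2-Rényi-controlled marginals.**
Let `μ` be a Borel probability measure on `ℝ^d` with tube tail bound
`μ {x | dist(x,S) ≥ t} ≤ C exp (-c t² / λ)` for all `t ≥ 0`. If `X 1, …, X M` are random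
vectors whose laws are absolutely continuous with respect to `μ` and satisfy
`∫ (dν_i/dμ)² dμ ≤ exp (ε²)`, then the maximum of `dist (X i, S)` has the stated
subgaussian tail, and there are constants `C₁, C₂` depending only on `C` and `c` bounding
`E[max_i dist (X i, S)]` by `C₁ e^{ε²/2} √(λ log (1+M))` and
`E[max_i dist (X i, S)²]` by `C₂ e^{ε²/2} λ log (1+M)`. -/
theorem tube_bounds_renyi_controlled_candidates
    (C c : ℝ) (hC : 0 < C) (hc : 0 < c) :
    ∃ C₁ C₂ : ℝ,
      ∀ (d : ℕ) (S : Set (EuclideanSpace ℝ (Fin d))), S.Nonempty →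
      ∀ lam : ℝ, 0 < lam →
      ∀ μ : Measure (EuclideanSpace ℝ (Fin d)), IsProbabilityMeasure μ →
      (∀ t : ℝ, 0 ≤ t →
        μ {x | t ≤ infDist x S} ≤ ENNReal.ofReal (C * Real.exp (-c * t ^ 2 / lam))) →
      ∀ M : ℕ, 1 ≤ M →
      ∀ (Ω : Type) [MeasurableSpace Ω] (Pr : Measure Ω), IsProbabilityMeasure Pr →
      ∀ X : Fin M → Ω → EuclideanSpace ℝ (Fin d), (∀ i, Measurable (X i)) →
      ∀ ε : ℝ, 0 ≤ ε →
      (∀ i, Measure.map (X i) Pr ≪ μ) →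
      (∀ i, ∫⁻ x, ((Measure.map (X i) Pr).rnDeriv μ x) ^ 2 ∂μ ≤
        ENNReal.ofReal (Real.exp (ε ^ 2))) →
      (∀ t : ℝ, 0 ≤ t →
        Pr {ω | t ≤ ⨆ i, infDist (X i ω) S} ≤
          ENNReal.ofReal ((M : ℝ) * Real.exp (ε ^ 2 / 2) * Real.sqrt C *
            Real.exp (-(c / 2) * t ^ 2 / lam))) ∧
      (∫ ω, (⨆ i, infDist (X i ω) S) ∂Pr ≤
        C₁ * Real.exp (ε ^ 2 / 2) * Real.sqrt (lam * Real.log (1 + (M : ℝ)))) ∧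
      (∫ ω, (⨆ i, infDist (X i ω) S) ^ 2 ∂Pr ≤
        C₂ * Real.exp (ε ^ 2 / 2) * (lam * Real.log (1 + (M : ℝ)))) := by
  refine ⟨√(secondMomentConst C c), secondMomentConst C c, ?_⟩
  intro d S _ lam hlam μ _ hμ M hM Ω _ Pr _ X hX ε _ hac hrenyi
  have : Nonempty (Fin M) := ⟨⟨0, hM⟩⟩
  simpa only [Fintype.card_fin] using tube_bounds_renyi_controlled_candidates_general hC.le hc hlam
    measurable_infDist.aemeasurable (fun _ => infDist_nonneg) hμ (fun i => (hX i).aemeasurable)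
    hac hrenyi
end

section
/- Non-differentiability of the hyper-objective in the kink counterexample: Define a : ℝ → ℝ by a(θ) = exp(−1/θ²)·sin(10/θ) for θ ≠ 0 and a(0) = 0, and define F : ℝ → ℝ by F(θ) = −√(1+θ²)·|a(θ)|. Then for every nonzero integer k, the function F is not differentiable at θ_k := 10/(kπ). (In particular F has countably infinitely many points of non-differentiability accumulating at 0.) -/
/-- The flat oscillating function `a(θ) = exp(-1/θ²)·sin(10/θ)` (with `a(0) = 0`). -/
noncomputable def aFun (θ : ℝ) : ℝ :=
  if θ = 0 then 0 else Real.exp (-1 / θ ^ 2) * Real.sin (10 / θ)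

/-- The hyper-objective `F(θ) = -√(1+θ²)·|a(θ)|` from the kink counterexample. -/
noncomputable def Fhyper (θ : ℝ) : ℝ := -(Real.sqrt (1 + θ ^ 2) * |aFun θ|)

/-!
At a zero of a function `f`, the function `‖f‖` has a minimum, so it can only be differentiable
there with derivative zero, and then `f` itself has derivative zero. Hence `|a|` is not
differentiable at a simple zero of `a`, and every nonzero zero of `a` is simple because `sin` and
`cos` do not vanish together. Multiplication by the smooth nonvanishing factor `-√(1+θ²)` does not
affect differentiability.
-/

theorem differentiableAt_norm_iff_hasFDerivAt_zero {E F : Type*}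
    [NormedAddCommGroup E] [NormedSpace ℝ E] [SeminormedAddCommGroup F] [NormedSpace ℝ F]
    {f : E → F} {x : E} (hx : f x = 0) :
    DifferentiableAt ℝ (fun y => ‖f y‖) x ↔ HasFDerivAt f (0 : E →L[ℝ] F) x := by
  have hmin : IsLocalMin (fun y => ‖f y‖) x := .of_forall fun y => by simp [hx]
  calc DifferentiableAt ℝ (fun y => ‖f y‖) x
      ↔ HasFDerivAt (fun y => ‖f y‖) (0 : E →L[ℝ] ℝ) x :=
        ⟨fun h => hmin.fderiv_eq_zero ▸ h.hasFDerivAt, HasFDerivAt.differentiableAt⟩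
    _ ↔ HasFDerivAt f (0 : E →L[ℝ] F) x := by
        simp only [hasFDerivAt_iff_isLittleO, hx, norm_zero, sub_zero,
          zero_apply, Asymptotics.isLittleO_norm_left]

theorem not_differentiableAt_norm_of_hasDerivAt {F : Type*}
    [NormedAddCommGroup F] [NormedSpace ℝ F] {f : ℝ → F} {f' : F} {x : ℝ}
    (hf : HasDerivAt f f' x) (hx : f x = 0) (hf' : f' ≠ 0) :
    ¬ DifferentiableAt ℝ (fun y => ‖f y‖) x := fun h =>
  have hf₀ : HasDerivAt f 0 x := by
    simpa using ((differentiableAt_norm_iff_hasFDerivAt_zero hx).1 h).hasDerivAt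
  hf' (hf.unique hf₀)

theorem aFun_eq_zero_iff {θ : ℝ} (hθ : θ ≠ 0) : aFun θ = 0 ↔ Real.sin (10 / θ) = 0 := by
  simp [aFun, hθ]

theorem hasDerivAt_aFun {θ : ℝ} (hθ : θ ≠ 0) :
    HasDerivAt aFun
      (Real.exp (-1 / θ ^ 2) *
        (2 / θ ^ 3 * Real.sin (10 / θ) - 10 / θ ^ 2 * Real.cos (10 / θ))) θ := by
  have hexp : HasDerivAt (fun y : ℝ => Real.exp (-1 / y ^ 2))
      (Real.exp (-1 / θ ^ 2) * (2 / θ ^ 3)) θ := by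
    convert ((hasDerivAt_const θ (-1 : ℝ)).fun_div (hasDerivAt_pow 2 θ) (pow_ne_zero 2 hθ)).exp
      using 2
    field_simp
    ring
  have hsin : HasDerivAt (fun y : ℝ => Real.sin (10 / y))
      (Real.cos (10 / θ) * (-10 / θ ^ 2)) θ := by
    convert ((hasDerivAt_const θ (10 : ℝ)).fun_div (hasDerivAt_id' θ) hθ).sin using 2
    ring
  have haFun : aFun =ᶠ[nhds θ] fun y => Real.exp (-1 / y ^ 2) * Real.sin (10 / y) := by
    filter_upwards [eventually_ne_nhds hθ] with y hy
    exact if_neg hy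
  refine ((hexp.fun_mul hsin).congr_of_eventuallyEq haFun).congr_deriv ?_
  ring

theorem not_differentiableAt_abs_aFun {θ : ℝ} (hθ : θ ≠ 0) (ha : aFun θ = 0) :
    ¬ DifferentiableAt ℝ (fun y => |aFun y|) θ := by
  have hsin : Real.sin (10 / θ) = 0 := (aFun_eq_zero_iff hθ).1 ha
  have hcos : Real.cos (10 / θ) ≠ 0 := fun h => by
    simpa [hsin, h] using Real.sin_sq_add_cos_sq (10 / θ)
  refine not_differentiableAt_norm_of_hasDerivAt (hasDerivAt_aFun hθ) ha ?_
  simp [hsin, hcos, hθ]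

theorem differentiableAt_Fhyper_iff {θ : ℝ} :
    DifferentiableAt ℝ Fhyper θ ↔ DifferentiableAt ℝ (fun y => |aFun y|) θ := by
  have hpos (y : ℝ) : 0 < 1 + y ^ 2 := by positivity
  have hsqrt : DifferentiableAt ℝ (fun y : ℝ => Real.sqrt (1 + y ^ 2)) θ :=
    DifferentiableAt.sqrt (by fun_prop) (hpos θ).ne'
  refine ⟨fun hF => ?_, fun ha => (hsqrt.mul ha).neg⟩
  have habs : (fun y => |aFun y|) = fun y => -(Fhyper y / Real.sqrt (1 + y ^ 2)) := by
    funext y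
    simp [Fhyper, neg_div, (Real.sqrt_pos.2 (hpos y)).ne']
  exact habs ▸ (hF.div hsqrt (Real.sqrt_pos.2 (hpos θ)).ne').neg

/-- **Non-differentiability of the hyper-objective in the kink counterexample.**
For every nonzero integer `k`, the function `F(θ) = -√(1+θ²)·|a(θ)|` is not differentiable
at `θ_k = 10 / (k π)`. -/
theorem hyperobjective_not_differentiable_at_kinks (k : ℤ) (hk : k ≠ 0) :
    ¬ DifferentiableAt ℝ Fhyper (10 / ((k : ℝ) * Real.pi)) := by
  have hkink : 10 / ((k : ℝ) * Real.pi) ≠ 0 := by positivity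
  have hsin : Real.sin (10 / (10 / ((k : ℝ) * Real.pi))) = 0 := by
    rw [div_div_cancel₀ (by norm_num), Real.sin_int_mul_pi]
  rw [differentiableAt_Fhyper_iff]
  exact not_differentiableAt_abs_aFun hkink ((aFun_eq_zero_iff hkink).2 hsin)
end

section
/- Unique minimizer formula for the degenerate scalar problem (from the Hölder-failure counterexample): Define η : ℝ → ℝ by η(s) = sign(s)·exp(−1/s²) for s ≠ 0 and η(0) = 0, and define φ(t) = ∫₀^t η(s) ds. Then for every real b with 0 < |b| ≤ 1/4 and every r ≥ 1, the function t ↦ φ(t) + b·t restricted to the interval [−r, r] attains its minimum at the unique point t⋆ = −sign(b)·(log(1/|b|))^{−1/2}; that is, |t⋆| < 1 ≤ r and φ(t⋆) + b·t⋆ < φ(t) + b·t for every t ∈ [−r, r] with t ≠ t⋆. -/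
/-- `η(s) = sign(s)·exp(-1/s²)` (which vanishes at `s = 0`). -/
noncomputable def etaFun (s : ℝ) : ℝ := Real.sign s * Real.exp (-1 / s ^ 2)

/-- `φ(t) = ∫₀ᵗ η(s) ds`. -/
noncomputable def phiFun (t : ℝ) : ℝ := ∫ s in (0 : ℝ)..t, etaFun s

/-! Since `η` is strictly increasing, `φ` lies strictly above each of its tangent lines away from
the point of contact. The tangent at `T` has slope `η(T)`, so `T` is the strict global minimizer of
`t ↦ φ(t) - η(T) t`, and it remains to solve `η(T) = -b`. As `η` is odd, this reduces to
`exp(-1/u²) = |b|` with `u > 0`, that is, to `u = (log(1/|b|))^{-1/2}`. -/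

open Real Set MeasureTheory

section TangentLine

variable {f : ℝ → ℝ} {a t : ℝ}

theorem mul_sub_lt_integral_of_strictMonoOn (hf : StrictMonoOn f (uIcc a t)) (hta : t ≠ a) :
    f a * (t - a) < ∫ s in a..t, f s := by
  have hfi : IntervalIntegrable f volume a t := hf.monotoneOn.intervalIntegrable
  rcases hta.lt_or_gt with hlt | hgt
  · rw [uIcc_of_ge hlt.le] at hf
    have hpos : 0 < ∫ s in t..a, (f a - f s) :=
      intervalIntegral.intervalIntegral_pos_of_pos_on (intervalIntegrable_const.sub hfi.symm)
        (fun s hs => sub_pos.2 (hf (Ioo_subset_Icc_self hs) (right_mem_Icc.2 hlt.le) hs.2)) hlt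
    rw [intervalIntegral.integral_sub intervalIntegrable_const hfi.symm,
      intervalIntegral.integral_const, smul_eq_mul, intervalIntegral.integral_symm] at hpos
    linarith
  · rw [uIcc_of_le hgt.le] at hf
    have hpos : 0 < ∫ s in a..t, (f s - f a) :=
      intervalIntegral.intervalIntegral_pos_of_pos_on (hfi.sub intervalIntegrable_const)
        (fun s hs => sub_pos.2 (hf (left_mem_Icc.2 hgt.le) (Ioo_subset_Icc_self hs) hs.1)) hgt
    rw [intervalIntegral.integral_sub hfi intervalIntegrable_const,
      intervalIntegral.integral_const, smul_eq_mul] at hpos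
    linarith

theorem integral_add_mul_sub_lt_integral_of_strictMono (hf : StrictMono f) (c : ℝ) (hta : t ≠ a) :
    (∫ s in c..a, f s) + f a * (t - a) < ∫ s in c..t, f s := by
  have hfi (x y : ℝ) : IntervalIntegrable f volume x y := hf.monotone.intervalIntegrable
  rw [← intervalIntegral.integral_add_adjacent_intervals (hfi c a) (hfi a t)]
  gcongr
  exact mul_sub_lt_integral_of_strictMonoOn (hf.strictMonoOn _) hta

end TangentLine

theorem apply_sign_mul_of_odd {f : ℝ → ℝ} (hf : Function.Odd f) (b u : ℝ) :
    f (sign b * u) = sign b * f u := by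
  rcases sign_apply_eq b with h | h | h
  · rw [h, neg_one_mul, neg_one_mul, hf]
  · rw [h, zero_mul, zero_mul, hf.map_zero]
  · rw [h, one_mul, one_mul]

theorem sign_mul_abs_self (b : ℝ) : sign b * |b| = b := by
  rcases lt_trichotomy b 0 with h | rfl | h
  · rw [sign_of_neg h, abs_of_neg h, neg_one_mul, neg_neg]
  · rw [abs_zero, mul_zero]
  · rw [sign_of_pos h, abs_of_pos h, one_mul]

theorem abs_sign_of_ne_zero {b : ℝ} (hb : b ≠ 0) : |sign b| = 1 := by
  rcases sign_apply_eq_of_ne_zero b hb with h | h <;> rw [h] <;> norm_num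

theorem odd_etaFun : Function.Odd etaFun := fun s => by
  rw [etaFun, etaFun, sign_neg, neg_sq, neg_mul]

theorem etaFun_of_pos {s : ℝ} (hs : 0 < s) : etaFun s = exp (-1 / s ^ 2) := by
  rw [etaFun, sign_of_pos hs, one_mul]

theorem strictMono_etaFun : StrictMono etaFun := by
  refine strictMono_of_odd_strictMonoOn_nonneg odd_etaFun fun x hx y _ hxy => ?_
  rw [etaFun_of_pos (hx.trans_lt hxy)]
  rcases (mem_Ici.1 hx).eq_or_lt with rfl | hx0
  · rw [odd_etaFun.map_zero]
    exact exp_pos _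
  · rw [etaFun_of_pos hx0, exp_lt_exp, neg_div, neg_div, neg_lt_neg_iff]
    gcongr

theorem phiFun_add_etaFun_mul_sub_lt {T t : ℝ} (ht : t ≠ T) :
    phiFun T + etaFun T * (t - T) < phiFun t :=
  integral_add_mul_sub_lt_integral_of_strictMono strictMono_etaFun 0 ht

theorem log_one_div_pos {c : ℝ} (hc0 : 0 < c) (hc1 : c < 1) : 0 < log (1 / c) :=
  log_pos (one_lt_one_div hc0 hc1)

theorem etaFun_log_one_div_rpow {c : ℝ} (hc0 : 0 < c) (hc1 : c < 1) :
    etaFun (log (1 / c) ^ (-(1 : ℝ) / 2)) = c := by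
  have hlog : 0 < log (1 / c) := log_one_div_pos hc0 hc1
  have hsq : (log (1 / c) ^ (-(1 : ℝ) / 2)) ^ 2 = (log (1 / c))⁻¹ := by
    rw [← rpow_mul_natCast hlog.le, ← rpow_neg_one]
    norm_num
  rw [etaFun_of_pos (rpow_pos_of_pos hlog _), hsq, div_inv_eq_mul, neg_one_mul, one_div, log_inv,
    neg_neg, exp_log hc0]

/-- The point `t⋆ = -sign(b)·(log(1/|b|))^{-1/2}` at which `t ↦ φ(t) + b t` is minimal, meaningful
for `0 < |b| < 1`. -/
noncomputable def degenerateMinimizer (b : ℝ) : ℝ :=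
  -(sign b) * log (1 / |b|) ^ (-(1 : ℝ) / 2)

section DegenerateMinimizer

variable {b : ℝ}

theorem etaFun_degenerateMinimizer (hb0 : b ≠ 0) (hb1 : |b| < 1) :
    etaFun (degenerateMinimizer b) = -b := by
  rw [degenerateMinimizer, neg_mul, odd_etaFun, apply_sign_mul_of_odd odd_etaFun,
    etaFun_log_one_div_rpow (abs_pos.2 hb0) hb1, sign_mul_abs_self]

theorem abs_degenerateMinimizer (hb0 : b ≠ 0) (hb1 : |b| < 1) :
    |degenerateMinimizer b| = log (1 / |b|) ^ (-(1 : ℝ) / 2) := by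
  have hlog : 0 < log (1 / |b|) := log_one_div_pos (abs_pos.2 hb0) hb1
  rw [degenerateMinimizer, abs_mul, abs_neg, abs_sign_of_ne_zero hb0, one_mul,
    abs_of_pos (rpow_pos_of_pos hlog _)]

theorem abs_degenerateMinimizer_lt_one_iff (hb0 : b ≠ 0) (hb1 : |b| < 1) :
    |degenerateMinimizer b| < 1 ↔ |b| < exp (-1) := by
  have hbpos : 0 < |b| := abs_pos.2 hb0
  calc |degenerateMinimizer b| < 1
      ↔ 1 < log (1 / |b|) := by
        rw [abs_degenerateMinimizer hb0 hb1, rpow_lt_one_iff_of_pos (log_one_div_pos hbpos hb1)]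
        norm_num
    _ ↔ |b| < exp (-1) := by
        rw [one_div, log_inv, lt_neg, log_lt_iff_lt_exp hbpos]

theorem degenerate_scalar_unique_minimizer_general (hb0 : b ≠ 0) (hb1 : |b| < 1) :
    (|degenerateMinimizer b| < 1 ↔ |b| < exp (-1)) ∧
    ∀ t, t ≠ degenerateMinimizer b →
      phiFun (degenerateMinimizer b) + b * degenerateMinimizer b < phiFun t + b * t := by
  refine ⟨abs_degenerateMinimizer_lt_one_iff hb0 hb1, fun t ht => ?_⟩
  have htangent := phiFun_add_etaFun_mul_sub_lt ht
  rw [etaFun_degenerateMinimizer hb0 hb1] at htangent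
  linarith

end DegenerateMinimizer

/-- **Unique minimizer formula for the degenerate scalar problem.**
For every real `b` with `0 < |b| ≤ 1/4` and every `r ≥ 1`, the function `t ↦ φ(t) + b t`
restricted to `[-r, r]` attains its minimum at the unique point
`t⋆ = -sign(b)·(log(1/|b|))^{-1/2}`: one has `|t⋆| < 1 ≤ r` and
`φ(t⋆) + b t⋆ < φ(t) + b t` for every `t ∈ [-r, r]` with `t ≠ t⋆`. -/
theorem degenerate_scalar_unique_minimizer (b r : ℝ) (hb0 : b ≠ 0) (hb : |b| ≤ 1 / 4)
    (hr : 1 ≤ r) :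
    |(-(Real.sign b) * Real.log (1 / |b|) ^ (-(1 : ℝ) / 2))| < 1 ∧
    ∀ t ∈ Set.Icc (-r) r, t ≠ -(Real.sign b) * Real.log (1 / |b|) ^ (-(1 : ℝ) / 2) →
      phiFun (-(Real.sign b) * Real.log (1 / |b|) ^ (-(1 : ℝ) / 2)) +
          b * (-(Real.sign b) * Real.log (1 / |b|) ^ (-(1 : ℝ) / 2)) <
        phiFun t + b * t := by
  obtain ⟨hlt_one, hmin⟩ := degenerate_scalar_unique_minimizer_general hb0 (by linarith)
  exact ⟨hlt_one.2 (by linarith [exp_neg_one_gt_d9]), fun t _ => hmin t⟩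
end

section
/- Upper bound on the Gibbs normalizing constant under quadratic growth: Let D > 0 and μ > 0, let S ⊆ ℝ^d be a nonempty set contained in the closed Euclidean ball of radius D centered at the origin, let g : ℝ^d → ℝ be Borel measurable, and let g⋆ ∈ ℝ satisfy g(x) ≥ g⋆ and the quadratic growth condition g(x) − g⋆ ≥ (μ/2)·dist(x, S)² for all x ∈ ℝ^d. Then there is a finite constant C_Z, depending only on μ, D, and d, such that for every λ with 0 < λ ≤ 1, ∫_{ℝ^d} exp(−g(x)/λ) dx ≤ C_Z · exp(−g⋆/λ). -/
open MeasureTheory Metric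

/-!
A point `x` lies within `dist(x, S) + D` of the origin, so `‖x‖² ≤ 2 (dist(x, S)² + D²)` and the
quadratic growth of `g` away from `S` becomes quadratic growth of `g` in `‖x‖`, up to the additive
constant `μ D² / 2`. Hence the Gibbs weight `exp (-g x / λ)` is dominated by `exp (-g⋆ / λ)` times a
multiple of a Gaussian, and `λ ≤ Λ` lets the same Gaussian serve for every `λ`.
-/

theorem dist_le_infDist_add_of_subset_closedBall {X : Type*} [PseudoMetricSpace X] {S : Set X}
    (hS : S.Nonempty) {c : X} {D : ℝ} (hSD : S ⊆ closedBall c D) (x : X) :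
    dist x c ≤ infDist x S + D := by
  rw [← sub_le_iff_le_add, le_infDist hS]
  intro y hy
  linarith [dist_triangle x y c, mem_closedBall.mp (hSD hy)]

theorem dist_sq_le_two_mul_infDist_sq_add_sq {X : Type*} [PseudoMetricSpace X] {S : Set X}
    (hS : S.Nonempty) {c : X} {D : ℝ} (hSD : S ⊆ closedBall c D) (x : X) :
    dist x c ^ 2 ≤ 2 * (infDist x S ^ 2 + D ^ 2) :=
  calc dist x c ^ 2
    _ ≤ (infDist x S + D) ^ 2 :=
      pow_le_pow_left₀ dist_nonneg (dist_le_infDist_add_of_subset_closedBall hS hSD x) 2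
    _ ≤ 2 * (infDist x S ^ 2 + D ^ 2) := add_sq_le

theorem exp_neg_div_le_gaussian_of_quadratic_growth {X : Type*} [PseudoMetricSpace X] {S : Set X}
    (hS : S.Nonempty) {c : X} {D : ℝ} (hSD : S ⊆ closedBall c D) {x : X} {μ v vstar : ℝ}
    (hμ : 0 ≤ μ) (hgrowth : μ / 2 * infDist x S ^ 2 ≤ v - vstar)
    {lam Lam : ℝ} (hlam : 0 < lam) (hLam : lam ≤ Lam) :
    Real.exp (-v / lam) ≤
      Real.exp (μ / (2 * Lam) * D ^ 2) * Real.exp (-(μ / (4 * Lam)) * dist x c ^ 2) *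
        Real.exp (-vstar / lam) := by
  have hLam₀ : 0 < Lam := hlam.trans_le hLam
  have growth_div : μ / 2 * infDist x S ^ 2 / Lam ≤ (v - vstar) / lam :=
    div_le_div₀ (le_trans (by positivity) hgrowth) hgrowth hlam hLam
  have growth_dist : μ / (4 * Lam) * dist x c ^ 2 - μ / (2 * Lam) * D ^ 2 ≤
      μ / 2 * infDist x S ^ 2 / Lam :=
    calc μ / (4 * Lam) * dist x c ^ 2 - μ / (2 * Lam) * D ^ 2
      _ ≤ μ / (4 * Lam) * (2 * (infDist x S ^ 2 + D ^ 2)) - μ / (2 * Lam) * D ^ 2 := by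
        gcongr
        exact dist_sq_le_two_mul_infDist_sq_add_sq hS hSD x
      _ = μ / 2 * infDist x S ^ 2 / Lam := by
        field_simp
        ring
  rw [← Real.exp_add, ← Real.exp_add, Real.exp_le_exp]
  have neg_div_eq : -v / lam = -vstar / lam - (v - vstar) / lam := by ring
  linarith

section NormedSpace

variable {E : Type*} [NormedAddCommGroup E] [NormedSpace ℝ E] [FiniteDimensional ℝ E]
  [MeasurableSpace E] [BorelSpace E] (ν : Measure E) [ν.IsAddHaarMeasure]

theorem integrable_exp_neg_mul_sq_norm {b : ℝ} (hb : 0 < b) :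
    Integrable (fun x : E => Real.exp (-b * ‖x‖ ^ 2)) ν := by
  rcases subsingleton_or_nontrivial E with _ | _
  · exact .of_subsingleton
  · rw [integrable_fun_norm_addHaar ν (f := fun r => Real.exp (-b * r ^ 2))]
    simpa only [Real.rpow_natCast, smul_eq_mul] using
      integrableOn_rpow_mul_exp_neg_mul_sq hb
        (neg_one_lt_zero.trans_le (Nat.cast_nonneg (Module.finrank ℝ E - 1)))

theorem gibbs_normalizing_constant_bound_general {D μ : ℝ} (hμ : 0 < μ) {S : Set E}
    (hS : S.Nonempty) (hSD : S ⊆ closedBall 0 D) {g : E → ℝ} (hg : AEMeasurable g ν) {gstar : ℝ}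
    (hgrowth : ∀ x, μ / 2 * infDist x S ^ 2 ≤ g x - gstar)
    {lam Lam : ℝ} (hlam : 0 < lam) (hLam : lam ≤ Lam) :
    Integrable (fun x => Real.exp (-g x / lam)) ν ∧
      ∫ x, Real.exp (-g x / lam) ∂ν ≤
        Real.exp (μ / (2 * Lam) * D ^ 2) * (∫ x, Real.exp (-(μ / (4 * Lam)) * ‖x‖ ^ 2) ∂ν) *
          Real.exp (-gstar / lam) := by
  have gaussian_integrable : Integrable (fun x => Real.exp (μ / (2 * Lam) * D ^ 2) *
      Real.exp (-(μ / (4 * Lam)) * ‖x‖ ^ 2) * Real.exp (-gstar / lam)) ν := by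
    have : 0 < Lam := hlam.trans_le hLam
    exact ((integrable_exp_neg_mul_sq_norm ν (by positivity)).const_mul _).mul_const _
  have gibbs_le (x : E) : Real.exp (-g x / lam) ≤ Real.exp (μ / (2 * Lam) * D ^ 2) *
      Real.exp (-(μ / (4 * Lam)) * ‖x‖ ^ 2) * Real.exp (-gstar / lam) := by
    simpa only [dist_zero_right] using
      exp_neg_div_le_gaussian_of_quadratic_growth hS hSD hμ.le (hgrowth x) hlam hLam
  have gibbs_integrable : Integrable (fun x => Real.exp (-g x / lam)) ν :=
    gaussian_integrable.mono' (hg.neg.div_const lam).exp.aestronglyMeasurable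
      (.of_forall fun x => (Real.norm_of_nonneg (Real.exp_nonneg _)).trans_le (gibbs_le x))
  refine ⟨gibbs_integrable, ?_⟩
  rw [← integral_const_mul, ← integral_mul_const]
  exact integral_mono gibbs_integrable gaussian_integrable gibbs_le

end NormedSpace

/-- **Upper bound on the Gibbs normalizing constant under quadratic growth.**
For every dimension `d` and constants `D > 0`, `μ > 0`, there is a finite constant `C_Z`
(depending only on `μ`, `D`, `d`) such that: for every nonempty set `S` contained in the
closed ball of radius `D` about the origin, every Borel measurable `g : ℝ^d → ℝ` and
`gstar ∈ ℝ` with `g ≥ gstar` and `g x - gstar ≥ (μ/2)·dist(x,S)²` for all `x`, and every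
`0 < λ ≤ 1`, one has `∫ exp (-g x / λ) dx ≤ C_Z · exp (-gstar / λ)`. -/
theorem gibbs_normalizing_constant_bound (d : ℕ) (D μ : ℝ) (hD : 0 < D) (hμ : 0 < μ) :
    ∃ CZ : ℝ,
      ∀ S : Set (EuclideanSpace ℝ (Fin d)), S.Nonempty →
        S ⊆ Metric.closedBall 0 D →
      ∀ g : EuclideanSpace ℝ (Fin d) → ℝ, Measurable g →
      ∀ gstar : ℝ, (∀ x, gstar ≤ g x) →
      (∀ x, μ / 2 * infDist x S ^ 2 ≤ g x - gstar) →
      ∀ lam : ℝ, 0 < lam → lam ≤ 1 →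
        ∫ x, Real.exp (-g x / lam) ≤ CZ * Real.exp (-gstar / lam) :=
  ⟨_, fun _ hS hSD _ hg _ _ hgrowth _ hlam hlam_le_one =>
    (gibbs_normalizing_constant_bound_general volume hμ hS hSD hg.aemeasurable hgrowth
      hlam hlam_le_one).2⟩
end

section
/- Gaussian cubic-integral bound against a smooth potential (key estimate for the warm-start Rényi bound): Let g : ℝ^d → ℝ be differentiable with L-Lipschitz gradient for some L > 0, fix τ with 0 < τ < 3/(2L), and set a := 3/(2τ) − L > 0. For z ∈ ℝ^d and λ > 0, let p(x) := (2πτλ)^{−d/2}·exp(−‖x − z‖² / (2τλ)) be the density of the Gaussian measure N(z, τλ·I_d). Then ∫_{ℝ^d} p(x)³ · exp(2 g(x)/λ) dx ≤ (2πτ)^{−3d/2} · (π/a)^{d/2} · λ^{−d} · exp( 2 g(z)/λ + ‖∇g(z)‖² / (a λ) ). -/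
open MeasureTheory

/-!
Since `∇ g` is `L`-Lipschitz, `g` lies below the quadratic with value `g z`, gradient `∇ g z` and
Hessian `L • id` at `z`. The exponent of the cubed Gaussian is `-3 ‖x - z‖ ^ 2 / (2 τ λ)`, so with
`a = 3 / (2 τ) - L` the total exponent is at most the concave quadratic
`2 g z / λ + ⟪(2 / λ) • ∇ g z, x - z⟫ - (a / λ) ‖x - z‖ ^ 2`, whose exponential has an explicit
integral.
-/

open Module Real
open scoped RealInnerProductSpace

section Descent

variable {E : Type*} [NormedAddCommGroup E] [InnerProductSpace ℝ E] [CompleteSpace E]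

theorem hasDerivAt_comp_lineMap {g : E → ℝ} {z x : E} {t : ℝ}
    (hg : DifferentiableAt ℝ g (AffineMap.lineMap z x t)) :
    HasDerivAt (fun s ↦ g (AffineMap.lineMap z x s))
      ⟪gradient g (AffineMap.lineMap z x t), x - z⟫ t := by
  simpa [Function.comp_def] using
    hg.hasGradientAt.hasFDerivAt.comp_hasDerivAt t AffineMap.hasDerivAt_lineMap

theorem le_quadratic_of_inner_gradient_sub_le {g : E → ℝ} (hg : Differentiable ℝ g) {L : ℝ} {z : E}
    (hgrad : ∀ x, ⟪gradient g x - gradient g z, x - z⟫ ≤ L * ‖x - z‖ ^ 2) (x : E) :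
    g x ≤ g z + ⟪gradient g z, x - z⟫ + L / 2 * ‖x - z‖ ^ 2 := by
  let φ : ℝ → ℝ := fun t ↦ g (AffineMap.lineMap z x t)
  let q : ℝ → ℝ := fun t ↦ g z + t * ⟪gradient g z, x - z⟫ + L / 2 * ‖x - z‖ ^ 2 * t ^ 2
  let φ' : ℝ → ℝ := fun t ↦ ⟪gradient g (AffineMap.lineMap z x t), x - z⟫
  let q' : ℝ → ℝ := fun t ↦ ⟪gradient g z, x - z⟫ + L * ‖x - z‖ ^ 2 * t
  have hφ (t : ℝ) : HasDerivAt φ (φ' t) t := hasDerivAt_comp_lineMap (hg _)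
  have hq (t : ℝ) : HasDerivAt q (q' t) t := by
    refine ((((hasDerivAt_id t).mul_const _).const_add _).add
      (((hasDerivAt_id t).pow 2).const_mul _)).congr_deriv ?_
    simp only [q', id_eq]
    ring
  have hφq (t : ℝ) (ht : 0 ≤ t) : φ' t ≤ q' t := by
    rcases ht.eq_or_lt with rfl | ht
    · simp [φ', q']
    have h := hgrad (AffineMap.lineMap z x t)
    have hsub : AffineMap.lineMap z x t - z = t • (x - z) := AffineMap.lineMap_vsub_left z x t
    rw [hsub, inner_smul_right, norm_smul, mul_pow, norm_eq_abs, sq_abs, inner_sub_left] at h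
    have : t * (φ' t - ⟪gradient g z, x - z⟫) ≤ t * (L * ‖x - z‖ ^ 2 * t) := by linarith
    linarith [le_of_mul_le_mul_left this ht]
  have hle : φ 1 ≤ q 1 := image_le_of_deriv_right_le_deriv_boundary
    (fun t _ ↦ (hφ t).continuousAt.continuousWithinAt) (fun t _ ↦ (hφ t).hasDerivWithinAt)
    (by simp [φ, q]) (fun t _ ↦ (hq t).continuousAt.continuousWithinAt)
    (fun t _ ↦ (hq t).hasDerivWithinAt) (fun t ht ↦ hφq t ht.1) (Set.right_mem_Icc.2 zero_le_one)
  simpa [φ, q] using hle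

theorem le_quadratic_of_norm_gradient_sub_le {g : E → ℝ} (hg : Differentiable ℝ g) {L : ℝ} {z : E}
    (hlip : ∀ x, ‖gradient g x - gradient g z‖ ≤ L * ‖x - z‖) (x : E) :
    g x ≤ g z + ⟪gradient g z, x - z⟫ + L / 2 * ‖x - z‖ ^ 2 :=
  le_quadratic_of_inner_gradient_sub_le hg
    (fun y ↦ by grw [real_inner_le_norm, hlip, mul_assoc, ← sq]) x

end Descent

section Gaussian

variable {E : Type*} [NormedAddCommGroup E] [InnerProductSpace ℝ E] [FiniteDimensional ℝ E]
  [MeasurableSpace E] [BorelSpace E]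

theorem integrable_exp_neg_mul_sq_norm_add_inner {b : ℝ} (hb : 0 < b) (w : E) :
    Integrable fun x : E ↦ exp (-b * ‖x‖ ^ 2 + ⟪w, x⟫) := by
  have h := GaussianFourier.integrable_cexp_neg_mul_sq_norm_add (b := b) (by simpa) 1 w
  have hcast : Integrable fun x : E ↦ (exp (-b * ‖x‖ ^ 2 + ⟪w, x⟫) : ℂ) := by simpa using h
  exact_mod_cast hcast.re

theorem integral_exp_neg_mul_sq_norm_add_inner {b : ℝ} (hb : 0 < b) (w : E) :
    ∫ x : E, exp (-b * ‖x‖ ^ 2 + ⟪w, x⟫) =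
      (π / b) ^ ((finrank ℝ E : ℝ) / 2) * exp (‖w‖ ^ 2 / (4 * b)) := by
  have h := GaussianFourier.integral_cexp_neg_mul_sq_norm_add (b := b) (by simpa) 1 w
  apply Complex.ofReal_injective
  rw [← integral_complex_ofReal]
  push_cast [Complex.ofReal_cpow (show 0 ≤ π / b by positivity)]
  simpa using h

theorem integrable_exp_quadratic {b : ℝ} (hb : 0 < b) (c : ℝ) (w z : E) :
    Integrable fun x : E ↦ exp (c + ⟪w, x - z⟫ - b * ‖x - z‖ ^ 2) := by
  refine (((integrable_exp_neg_mul_sq_norm_add_inner hb w).comp_sub_right z).const_mul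
    (exp c)).congr (.of_forall fun x ↦ ?_)
  simp only [← exp_add]
  ring_nf

theorem integral_exp_quadratic {b : ℝ} (hb : 0 < b) (c : ℝ) (w z : E) :
    ∫ x : E, exp (c + ⟪w, x - z⟫ - b * ‖x - z‖ ^ 2) =
      (π / b) ^ ((finrank ℝ E : ℝ) / 2) * exp (c + ‖w‖ ^ 2 / (4 * b)) := by
  calc ∫ x : E, exp (c + ⟪w, x - z⟫ - b * ‖x - z‖ ^ 2)
    _ = ∫ x : E, exp (c + ⟪w, x⟫ - b * ‖x‖ ^ 2) :=
      integral_sub_right_eq_self (fun x : E ↦ exp (c + ⟪w, x⟫ - b * ‖x‖ ^ 2)) z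
    _ = ∫ x : E, exp c * exp (-b * ‖x‖ ^ 2 + ⟪w, x⟫) := by
      congr with x
      rw [← exp_add]
      ring_nf
    _ = (π / b) ^ ((finrank ℝ E : ℝ) / 2) * exp (c + ‖w‖ ^ 2 / (4 * b)) := by
      rw [integral_const_mul, integral_exp_neg_mul_sq_norm_add_inner hb, exp_add]
      ring

theorem integrable_exp_of_le_quadratic {f : E → ℝ} (hf : AEMeasurable f) {b c : ℝ} (hb : 0 < b)
    {w z : E} (hle : ∀ x, f x ≤ c + ⟪w, x - z⟫ - b * ‖x - z‖ ^ 2) :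
    Integrable fun x ↦ exp (f x) :=
  (integrable_exp_quadratic hb c w z).mono' hf.exp.aestronglyMeasurable <|
    .of_forall fun x ↦ by simpa only [norm_eq_abs, abs_exp] using exp_le_exp.2 (hle x)

theorem integral_exp_le_of_le_quadratic {f : E → ℝ} {b c : ℝ} (hb : 0 < b) {w z : E}
    (hle : ∀ x, f x ≤ c + ⟪w, x - z⟫ - b * ‖x - z‖ ^ 2) :
    ∫ x, exp (f x) ≤ (π / b) ^ ((finrank ℝ E : ℝ) / 2) * exp (c + ‖w‖ ^ 2 / (4 * b)) := by
  rw [← integral_exp_quadratic hb c w z]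
  exact integral_mono_of_nonneg (.of_forall fun _ ↦ (exp_pos _).le)
    (integrable_exp_quadratic hb c w z) (.of_forall fun x ↦ exp_le_exp.2 (hle x))

end Gaussian

theorem rpow_cube_mul_rpow_div_div {k r a lam : ℝ} (hk : 0 ≤ k) (hra : 0 ≤ r / a) (hlam : 0 < lam)
    (d : ℝ) :
    ((k * lam) ^ (-d / 2)) ^ 3 * (r / (a / lam)) ^ (d / 2) =
      k ^ (-(3 * d) / 2) * (r / a) ^ (d / 2) * lam ^ (-d) := by
  have hcube : ((k * lam) ^ (-d / 2)) ^ 3 = k ^ (-(3 * d) / 2) * lam ^ (-(3 * d) / 2) := by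
    rw [← rpow_mul_natCast (by positivity), ← mul_rpow hk hlam.le]
    congr 1
    push_cast
    ring
  have hdiv : (r / (a / lam)) ^ (d / 2) = (r / a) ^ (d / 2) * lam ^ (d / 2) := by
    rw [← mul_rpow hra hlam.le, div_div_eq_mul_div, mul_div_right_comm]
  have hlam_rpow : lam ^ (-d) = lam ^ (-(3 * d) / 2) * lam ^ (d / 2) := by
    rw [← rpow_add hlam]
    congr 1
    ring
  rw [hcube, hdiv, hlam_rpow]
  ring

theorem mul_exp_cube_mul_exp (c s u τ lam : ℝ) :
    (c * exp (-s / (2 * τ * lam))) ^ 3 * exp u =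
      c ^ 3 * exp (-(3 / (2 * τ)) / lam * s + u) := by
  rw [mul_pow, mul_assoc, ← exp_nat_mul, ← exp_add]
  congr 3
  push_cast
  field_simp

theorem gaussian_cubic_integral_bound_general
    {E : Type*} [NormedAddCommGroup E] [InnerProductSpace ℝ E] [FiniteDimensional ℝ E]
    [MeasurableSpace E] [BorelSpace E] {g : E → ℝ} (hg : AEMeasurable g) {L : ℝ} {z w : E}
    (hle : ∀ x, g x ≤ g z + ⟪w, x - z⟫ + L / 2 * ‖x - z‖ ^ 2)
    {τ : ℝ} (hτ0 : 0 < τ) (hτ : L < 3 / (2 * τ)) {lam : ℝ} (hlam : 0 < lam) :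
    Integrable (fun x ↦ ((2 * π * τ * lam) ^ (-(finrank ℝ E : ℝ) / 2) *
        exp (-‖x - z‖ ^ 2 / (2 * τ * lam))) ^ 3 * exp (2 * g x / lam)) ∧
      ∫ x, ((2 * π * τ * lam) ^ (-(finrank ℝ E : ℝ) / 2) *
          exp (-‖x - z‖ ^ 2 / (2 * τ * lam))) ^ 3 * exp (2 * g x / lam) ≤
        (2 * π * τ) ^ (-(3 * (finrank ℝ E : ℝ)) / 2) *
          (π / (3 / (2 * τ) - L)) ^ ((finrank ℝ E : ℝ) / 2) * lam ^ (-(finrank ℝ E : ℝ)) *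
          exp (2 * g z / lam + ‖w‖ ^ 2 / ((3 / (2 * τ) - L) * lam)) := by
  set d : ℝ := (finrank ℝ E : ℝ)
  set a : ℝ := 3 / (2 * τ) - L with ha_def
  have ha : 0 < a := sub_pos.2 hτ
  let f : E → ℝ := fun x ↦ -(3 / (2 * τ)) / lam * ‖x - z‖ ^ 2 + 2 * g x / lam
  have hintegrand (x : E) :
      ((2 * π * τ * lam) ^ (-d / 2) * exp (-‖x - z‖ ^ 2 / (2 * τ * lam))) ^ 3 *
        exp (2 * g x / lam) = ((2 * π * τ * lam) ^ (-d / 2)) ^ 3 * exp (f x) :=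
    mul_exp_cube_mul_exp ..
  have hf (x : E) :
      f x ≤ 2 * g z / lam + ⟪(2 / lam) • w, x - z⟫ - a / lam * ‖x - z‖ ^ 2 := by
    have h := mul_le_mul_of_nonneg_left (hle x) (show 0 ≤ 2 / lam by positivity)
    rw [real_inner_smul_left]
    simp only [f, ha_def]
    linear_combination h
  have hnorm : ‖(2 / lam) • w‖ ^ 2 / (4 * (a / lam)) = ‖w‖ ^ 2 / (a * lam) := by
    rw [norm_smul, norm_of_nonneg (by positivity)]
    field_simp
    ring
  simp only [hintegrand]
  refine ⟨(integrable_exp_of_le_quadratic (by fun_prop) (by positivity) hf).const_mul _, ?_⟩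
  rw [integral_const_mul]
  calc ((2 * π * τ * lam) ^ (-d / 2)) ^ 3 * ∫ x, exp (f x)
    _ ≤ ((2 * π * τ * lam) ^ (-d / 2)) ^ 3 *
        ((π / (a / lam)) ^ (d / 2) *
          exp (2 * g z / lam + ‖(2 / lam) • w‖ ^ 2 / (4 * (a / lam)))) := by
      gcongr
      exact integral_exp_le_of_le_quadratic (by positivity) hf
    _ = _ := by
      rw [← mul_assoc, rpow_cube_mul_rpow_div_div (by positivity) (by positivity) hlam, hnorm]

/-- **Gaussian cubic-integral bound against a smooth potential.**
Let `g : ℝ^d → ℝ` be differentiable with `L`-Lipschitz gradient, fix `0 < τ < 3/(2L)`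
(so `a := 3/(2τ) - L > 0`), and let `p` be the density of the Gaussian `N(z, τ λ I_d)`.
Then `∫ p(x)³ exp (2 g(x)/λ) dx` is bounded by
`(2πτ)^{-3d/2} (π/a)^{d/2} λ^{-d} exp (2 g(z)/λ + ‖∇g(z)‖²/(a λ))`. -/
theorem gaussian_cubic_integral_bound
    {d : ℕ}
    (g : EuclideanSpace ℝ (Fin d) → ℝ)
    (L : ℝ) (hL : 0 < L)
    (hg : Differentiable ℝ g)
    (hlip : ∀ x y : EuclideanSpace ℝ (Fin d),
      ‖gradient g x - gradient g y‖ ≤ L * ‖x - y‖)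
    (τ : ℝ) (hτ0 : 0 < τ) (hτ : τ < 3 / (2 * L))
    (z : EuclideanSpace ℝ (Fin d))
    (lam : ℝ) (hlam : 0 < lam) :
    ∫ x, ((2 * Real.pi * τ * lam) ^ (-(d : ℝ) / 2) *
          Real.exp (-‖x - z‖ ^ 2 / (2 * τ * lam))) ^ 3 *
        Real.exp (2 * g x / lam) ≤
      (2 * Real.pi * τ) ^ (-(3 * (d : ℝ)) / 2) *
        (Real.pi / (3 / (2 * τ) - L)) ^ ((d : ℝ) / 2) * lam ^ (-(d : ℝ)) *
        Real.exp (2 * g z / lam + ‖gradient g z‖ ^ 2 / ((3 / (2 * τ) - L) * lam)) := by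
  have hL_lt : L < 3 / (2 * τ) := by
    rw [lt_div_iff₀ (by positivity)] at hτ ⊢
    linarith
  simpa only [finrank_euclideanSpace_fin] using
    (gaussian_cubic_integral_bound_general hg.continuous.aemeasurable
      (le_quadratic_of_norm_gradient_sub_le hg (hlip · z)) hτ0 hL_lt hlam).2
end
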